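/- arXiv:2007.07088 — 10 statements merged into one kernel-verified Lean document; each statement's English description precedes it below -/
import Mathlib

section
/- Given a setting (N,M,q) and a bound r ∈ [0,1], if a mechanism φ is r-locally partially strategyproof, then φ is r²-partially strategyproof. -/
open Finset

/-- A preference order on `M` is a strict total order, represented as a ranking
bijection to `Fin m` (rank `0` is the most preferred object).
`P a < P b` means that `P` ranks `a` above `b`. -/
def Consistent {M : Type*} {m : ℕ} (u : M → ℝ) (P : M ≃ Fin m) : Prop :=
  ∀ a b : M, P a < P b → u b < u a

/-- The minimal utility value `min_{j ∈ M} u(j)`. -/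
noncomputable def minU {M : Type*} [Fintype M] [Nonempty M] (u : M → ℝ) : ℝ :=
  Finset.univ.inf' Finset.univ_nonempty u

/-- `u` satisfies uniformly relatively bounded indifference with respect to `r`. -/
def URBI {M : Type*} [Fintype M] [Nonempty M] (u : M → ℝ) (r : ℝ) : Prop :=
  ∀ a b : M, u b < u a → u b - minU u ≤ r * (u a - minU u)

/-- `P'` is in the neighborhood of `P`: it is obtained from `P` by swapping two
consecutively ranked objects. -/
def Nbhd {M : Type*} {m : ℕ} (P P' : M ≃ Fin m) : Prop :=
  ∃ (k : ℕ) (h : k + 1 < m),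
    P' = P.trans (Equiv.swap ⟨k, Nat.lt_of_succ_lt h⟩ ⟨k + 1, h⟩)

/-- A feasible random assignment mechanism for the setting `(N, M, q)`:
entries are nonnegative, each agent's row sums to one, and no object is
assigned beyond its capacity. -/
def Feasible {N M : Type*} [Fintype N] [Fintype M] {m : ℕ} (q : M → ℕ)
    (φ : (N → M ≃ Fin m) → N → M → ℝ) : Prop :=
  ∀ P : N → M ≃ Fin m,
    (∀ i j, 0 ≤ φ P i j) ∧ (∀ i, ∑ j, φ P i j = 1) ∧ (∀ j, ∑ i, φ P i j ≤ (q j : ℝ))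

/-- `φ` is `r`-partially strategyproof. -/
def PSP {N M : Type*} [DecidableEq N] [Fintype M] [Nonempty M] {m : ℕ}
    (φ : (N → M ≃ Fin m) → N → M → ℝ) (r : ℝ) : Prop :=
  ∀ (P : N → M ≃ Fin m) (i : N) (P' : M ≃ Fin m) (u : M → ℝ),
    (∀ j, 0 ≤ u j) → Consistent u (P i) → URBI u r →
    ∑ j, u j * φ (Function.update P i P') i j ≤ ∑ j, u j * φ P i j

/-- `φ` is `r`-locally partially strategyproof: the incentive constraint is only
required for misreports in the neighborhood of the truthful report. -/
def LocalPSP {N M : Type*} [DecidableEq N] [Fintype M] [Nonempty M] {m : ℕ}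
    (φ : (N → M ≃ Fin m) → N → M → ℝ) (r : ℝ) : Prop :=
  ∀ (P : N → M ≃ Fin m) (i : N) (P' : M ≃ Fin m), Nbhd (P i) P' →
    ∀ u : M → ℝ, (∀ j, 0 ≤ u j) → Consistent u (P i) → URBI u r →
    ∑ j, u j * φ (Function.update P i P') i j ≤ ∑ j, u j * φ P i j

def WC {M : Type*} {m : ℕ} (Q : M ≃ Fin m) (r : ℝ) (v : M → ℝ) : Prop :=
  (∀ j, 0 ≤ v j) ∧ (∃ j, v j = 0) ∧ ∀ i j, Q i < Q j → v j ≤ r * v i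

lemma minU_eq_zero {M : Type*} [Fintype M] [Nonempty M] (v : M → ℝ)
    (h0 : ∀ j, 0 ≤ v j) (h1 : ∃ j, v j = 0) : minU v = 0 := by
  obtain ⟨j, hj⟩ := h1
  apply le_antisymm
  · rw [← hj]; exact Finset.inf'_le _ (Finset.mem_univ j)
  · exact Finset.le_inf' _ _ (fun b _ => h0 b)

lemma minU_le' {M : Type*} [Fintype M] [Nonempty M] (v : M → ℝ) (j : M) : minU v ≤ v j :=
  Finset.inf'_le _ (Finset.mem_univ j)

lemma closure_lemma {M : Type*} [Fintype M] [Nonempty M] {m : ℕ} (Q : M ≃ Fin m)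
    (r : ℝ) (g v d : M → ℝ) (hg : WC Q r g) (hgc : Consistent g Q)
    (hv : WC Q r v) (hr1 : r ≤ 1)
    (h : ∀ v : M → ℝ, (∀ j, 0 ≤ v j) → Consistent v Q → URBI v r → ∑ j, v j * d j ≤ 0) :
    ∑ j, v j * d j ≤ 0 := by
  obtain ⟨hg0, ⟨j1, hj1⟩, hgr⟩ := hg
  obtain ⟨hv0, ⟨j0, hj0⟩, hvr⟩ := hv
  have hlast : v j1 = 0 := by
    rcases lt_trichotomy (Q j0) (Q j1) with hlt | heq | hgt
    · have := hvr _ _ hlt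
      rw [hj0] at this
      linarith [hv0 j1]
    · rw [← Q.injective heq]; exact hj0
    · have := hgc _ _ hgt
      linarith [hg0 j0]
  have key : ∀ ε : ℝ, 0 < ε → ∑ j, v j * d j + ε * ∑ j, g j * d j ≤ 0 := by
    intro ε hε
    have hc : Consistent (fun j => v j + ε * g j) Q := by
      intro a b hab
      have h1 := hgc a b hab
      have h2 := hvr a b hab
      have h3 := mul_lt_mul_of_pos_left h1 hε
      have h4 : r * v a ≤ 1 * v a := mul_le_mul_of_nonneg_right hr1 (hv0 a)
      simp only
      linarith
    have h0 : ∀ j, 0 ≤ v j + ε * g j := fun j =>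
      add_nonneg (hv0 j) (mul_nonneg hε.le (hg0 j))
    have hm0 : minU (fun j => v j + ε * g j) = 0 :=
      minU_eq_zero _ h0 ⟨j1, by simp [hlast, hj1]⟩
    have hu : URBI (fun j => v j + ε * g j) r := by
      intro a b hab
      rw [hm0]
      simp only [sub_zero]
      have hQ : Q a < Q b := by
        rcases lt_trichotomy (Q a) (Q b) with hlt | heq | hgt
        · exact hlt
        · rw [Q.injective heq] at hab; exact absurd hab (lt_irrefl _)
        · exact absurd hab (not_lt.mpr (hc _ _ hgt).le)
      have h1 := hgr a b hQ
      have h2 := hvr a b hQ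
      have h3 := mul_le_mul_of_nonneg_left h1 hε.le
      nlinarith
    have := h _ h0 hc hu
    rw [Finset.mul_sum, ← Finset.sum_add_distrib]
    refine le_trans (le_of_eq ?_) this
    apply Finset.sum_congr rfl
    intros; ring
  by_contra hA
  push Not at hA
  set A := ∑ j, v j * d j
  set G := ∑ j, g j * d j
  have hpos : 0 < |G| + 1 := by positivity
  have h1 := key (A / (|G| + 1)) (by positivity)
  have h2 : A / (|G| + 1) * (|G| + 1) = A := by field_simp
  have h3 : 0 < A / (|G| + 1) := by positivity
  have h4 := neg_abs_le G
  nlinarith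

lemma perm_WC {M : Type*} [Fintype M] [Nonempty M] {m : ℕ} (P Q : M ≃ Fin m)
    (r : ℝ) (h0 : 0 ≤ r) (h1 : r ≤ 1) (u : M → ℝ) (hc : Consistent u P)
    (hu : URBI u (r ^ 2)) :
    WC Q r (fun j => u (P.symm (Q j)) - minU u) ∧
      Consistent (fun j => u (P.symm (Q j)) - minU u) Q := by
  refine ⟨⟨fun j => sub_nonneg.mpr (minU_le' u _), ?_, ?_⟩, ?_⟩
  · obtain ⟨j, _, hj⟩ := Finset.exists_mem_eq_inf' (Finset.univ_nonempty (α := M)) u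
    refine ⟨Q.symm (P j), ?_⟩
    simp [minU, hj]
  · intro i j hij
    have := hu _ _ (hc (P.symm (Q i)) (P.symm (Q j)) (by simpa using hij))
    have h2 := minU_le' u (P.symm (Q i))
    simp only
    nlinarith [mul_nonneg (mul_nonneg h0 (sub_nonneg.mpr h1)) (sub_nonneg.mpr h2)]
  · intro a b hab
    have := hc (P.symm (Q a)) (P.symm (Q b)) (by simpa using hab)
    simp only
    linarith

lemma step_lemma {M : Type*} [Fintype M] [Nonempty M] {m : ℕ} (P Q : M ≃ Fin m)
    (r : ℝ) (h0 : 0 < r) (h1 : r ≤ 1) (u : M → ℝ) (hc : Consistent u P)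
    (hu : URBI u (r ^ 2)) (k : ℕ) (hk : k + 1 < m)
    (hab : P (Q.symm ⟨k, Nat.lt_of_succ_lt hk⟩) < P (Q.symm ⟨k + 1, hk⟩))
    (hlow : ∀ x y : Fin m, k ≤ x.1 → x.1 ≠ k + 1 → y.1 ≠ k + 1 → x < y →
      P (Q.symm x) < P (Q.symm y))
    (d : M → ℝ) (hd : ∑ j, d j = 0)
    (hQ : ∀ v : M → ℝ, (∀ j, 0 ≤ v j) → Consistent v Q → URBI v r → ∑ j, v j * d j ≤ 0)
    (hQ' : ∀ v : M → ℝ, (∀ j, 0 ≤ v j) →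
      Consistent v (Q.trans (Equiv.swap ⟨k, Nat.lt_of_succ_lt hk⟩ ⟨k + 1, hk⟩)) →
      URBI v r → 0 ≤ ∑ j, v j * d j) :
    ∑ j, u j * d j ≤ 0 := by
  classical
  set a := Q.symm ⟨k, Nat.lt_of_succ_lt hk⟩ with ha
  set b := Q.symm ⟨k + 1, hk⟩ with hb
  set Q' := Q.trans (Equiv.swap ⟨k, Nat.lt_of_succ_lt hk⟩ ⟨k + 1, hk⟩) with hQ'def
  have hQa : (Q a).1 = k := by simp [ha]
  have hQb : (Q b).1 = k + 1 := by simp [hb]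
  have eqa : ∀ j, (Q j).1 = k → j = a := fun j hj => by
    apply Q.injective; apply Fin.ext; rw [hj, hQa]
  have eqb : ∀ j, (Q j).1 = k + 1 → j = b := fun j hj => by
    apply Q.injective; apply Fin.ext; rw [hj, hQb]
  have hlow' : ∀ i j : M, k ≤ (Q i).1 → (Q i).1 ≠ k + 1 → (Q j).1 ≠ k + 1 → (Q i).1 < (Q j).1 →
      P i < P j := fun i j q1 q2 q3 q4 => by
    simpa using hlow (Q i) (Q j) q1 q2 q3 (Fin.lt_def.mpr q4)
  -- the last low object
  obtain ⟨e, he1, he2, he3⟩ : ∃ e : M, k ≤ (Q e).1 ∧ (Q e).1 ≠ k + 1 ∧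
      ∀ j, (Q j).1 ≠ k + 1 → (Q j).1 ≤ (Q e).1 := by
    by_cases h : k + 2 < m
    · refine ⟨Q.symm ⟨m - 1, by omega⟩, ?_, ?_, ?_⟩
      · simp; omega
      · simp; omega
      · intro j _; have := (Q j).2; simp; omega
    · refine ⟨a, ?_, ?_, ?_⟩
      · omega
      · omega
      · intro j hj; have := (Q j).2; omega
  set c := u e with hcdef
  have hce : ∀ i, k ≤ (Q i).1 → (Q i).1 ≠ k + 1 → c ≤ u i := by
    intro i hi1 hi2
    rcases (he3 i hi2).lt_or_eq with hlt | heq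
    · exact (hc _ _ (hlow' i e hi1 hi2 he2 hlt)).le
    · rw [hcdef, Q.injective (Fin.ext heq)]
  have hrat : ∀ i j, P i < P j → c ≤ u i → u j - c ≤ r ^ 2 * (u i - c) := by
    intro i j hij hci
    have q1 := hu i j (hc i j hij)
    have q2 : minU u ≤ c := minU_le' u e
    have q3 : r ^ 2 ≤ 1 := by nlinarith
    nlinarith
  obtain ⟨B, hB⟩ : ∃ B : ℝ, ∀ j, |u j - c| ≤ B := by
    refine ⟨∑ j, |u j - c|, fun j => ?_⟩
    exact Finset.single_le_sum (f := fun j => |u j - c|) (fun i _ => abs_nonneg _)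
      (Finset.mem_univ j)
  have hB0 : 0 ≤ B := (abs_nonneg _).trans (hB a)
  have hBu : ∀ j, u j - c ≤ B := fun j => (le_abs_self _).trans (hB j)
  have hBl : ∀ j, -B ≤ u j - c := fun j => by
    have := neg_abs_le (u j - c); linarith [hB j]
  set D := 2 / r with hD
  have hrD : r * D = 2 := by rw [hD]; field_simp
  have hD2 : 2 ≤ D := by rw [hD, le_div_iff₀ h0]; linarith
  have hca : c ≤ u a := hce a (by omega) (by omega)
  set β := r * (u a - c) - (u b - c) with hβ
  have hrr : r ^ 2 ≤ r := by nlinarith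
  have hβ0 : 0 ≤ β := by
    have := hrat a b hab hca
    nlinarith
  have hraB : r * (u a - c) ≤ B := by nlinarith [hBu a]
  have hβB : β ≤ 2 * B := by linarith [hBl b]
  -- top values
  set V : ℕ → ℝ := fun x => B * D ^ (k - x) with hV
  have hV1 : ∀ x, x < k → 2 * B ≤ V x := by
    intro x hx
    have : D ^ 1 ≤ D ^ (k - x) := pow_le_pow_right₀ (by linarith) (by omega)
    simp only [hV]
    nlinarith
  have hV2 : ∀ x, x < k → 2 * B ≤ r * V x := by
    intro x hx
    have e1 : D ^ (k - x) = D * D ^ (k - x - 1) := by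
      rw [← pow_succ']; congr 1; omega
    have : 1 ≤ D ^ (k - x - 1) := one_le_pow₀ (by linarith)
    have e2 : r * V x = 2 * (B * D ^ (k - x - 1)) := by
      simp only [hV]; rw [e1, ← hrD]; ring
    rw [e2]; nlinarith
  have hV3 : ∀ x y, x < y → y < k → 2 * V y ≤ r * V x := by
    intro x y hx hy
    have e1 : D ^ (k - x) = D * D ^ (k - x - 1) := by
      rw [← pow_succ']; congr 1; omega
    have : D ^ (k - y) ≤ D ^ (k - x - 1) := pow_le_pow_right₀ (by linarith) (by omega)
    have e2 : r * V x = 2 * (B * D ^ (k - x - 1)) := by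
      simp only [hV]; rw [e1, ← hrD]; ring
    rw [e2]; simp only [hV]; nlinarith
  set v : M → ℝ := fun j => if (Q j).1 < k then V (Q j).1 else if (Q j).1 = k + 1 then β else 0
    with hv
  have vt : ∀ j, (Q j).1 < k → v j = V (Q j).1 := fun j h => by simp [hv, h]
  have vb : ∀ j, (Q j).1 = k + 1 → v j = β := fun j h => by simp [hv, h]
  have vl : ∀ j, k ≤ (Q j).1 → (Q j).1 ≠ k + 1 → v j = 0 := fun j h h' => by
    simp [hv, h', not_lt.mpr h]
  have hswap : ∀ i j, Q' i < Q' j → (Q i).1 < (Q j).1 ∧ ¬ ((Q i).1 = k ∧ (Q j).1 = k + 1) ∨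
      ((Q i).1 = k + 1 ∧ (Q j).1 = k) := by
    intro i j hij
    simp only [hQ'def, Equiv.trans_apply, Equiv.swap_apply_def, Fin.ext_iff, Fin.lt_def] at hij
    split_ifs at hij <;> (try dsimp only at hij) <;> omega
  have hv0 : ∀ j, 0 ≤ v j := by
    intro j
    by_cases q1 : (Q j).1 < k
    · rw [vt j q1]; linarith [hV1 _ q1]
    · by_cases q2 : (Q j).1 = k + 1
      · rw [vb j q2]; exact hβ0
      · rw [vl j (by omega) q2]
  have hvWC : WC Q' r v := by
    refine ⟨hv0, ⟨e, vl e he1 he2⟩, ?_⟩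
    intro i j hij
    by_cases q1 : (Q j).1 < k
    · have q0 : (Q i).1 < (Q j).1 := by rcases hswap i j hij with h | h <;> omega
      rw [vt j q1, vt i (by omega)]
      linarith [hV3 _ _ q0 q1, hV1 _ q1]
    · by_cases q2 : (Q j).1 = k + 1
      · have q0 : (Q i).1 < k := by rcases hswap i j hij with h | h <;> omega
        rw [vb j q2, vt i q0]
        linarith [hV2 _ q0]
      · rw [vl j (by omega) q2]
        exact mul_nonneg h0.le (hv0 i)
  have wb : ∀ j, (Q j).1 = k + 1 → u j + v j - c = r * (u a - c) := fun j h => by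
    rw [vb j h, eqb j h, hβ]; ring
  have wlow : ∀ j, k ≤ (Q j).1 → 0 ≤ u j + v j - c ∧ u j + v j - c ≤ B := fun j h => by
    by_cases q2 : (Q j).1 = k + 1
    · rw [wb j q2]; exact ⟨mul_nonneg h0.le (by linarith), hraB⟩
    · rw [vl j h q2]
      have := hce j h q2
      exact ⟨by linarith, by linarith [hBu j]⟩
  have hwWC : WC Q r (fun j => u j + v j - c) := by
    refine ⟨?_, ⟨e, ?_⟩, ?_⟩
    · intro j
      by_cases q1 : (Q j).1 < k
      · simp only; rw [vt j q1]; linarith [hV1 _ q1, hBl j]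
      · exact (wlow j (by omega)).1
    · simp only; rw [vl e he1 he2]; simp [hcdef]
    · intro i j hij
      simp only
      have hij' : (Q i).1 < (Q j).1 := Fin.lt_def.mp hij
      by_cases q1 : (Q i).1 < k
      · have q3 : -B ≤ r * (u i - c) := by nlinarith [hBl i]
        by_cases q2 : (Q j).1 < k
        · rw [vt i q1, vt j q2]
          linarith [hV3 _ _ hij' q2, hV1 _ q2, hBu j]
        · rw [vt i q1]
          linarith [hV2 _ q1, (wlow j (by omega)).2]
      · by_cases q2 : (Q j).1 = k + 1
        · have : i = a := eqa i (by omega)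
          rw [wb j q2, this, vl a (by omega) (by omega)]; simp
        · by_cases q3 : (Q i).1 = k + 1
          · rw [wb i q3, vl j (by omega) q2]
            have := hrat a j (hlow' a j (by omega) (by omega) q2 (by omega)) hca
            linarith
          · rw [vl i (by omega) q3, vl j (by omega) q2]
            have hci := hce i (by omega) q3
            have := hrat i j (hlow' i j (by omega) q3 q2 hij') hci
            nlinarith
  obtain ⟨g1, g2⟩ := perm_WC P Q r h0.le h1 u hc hu
  obtain ⟨g1', g2'⟩ := perm_WC P Q' r h0.le h1 u hc hu
  have R1 := closure_lemma Q r _ _ d g1 g2 hwWC h1 hQ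
  have R2 := closure_lemma Q' r _ _ (fun j => - d j) g1' g2' hvWC h1 (by
    intro v a1 a2 a3
    have := hQ' v a1 a2 a3
    simpa using this)
  have R3 : ∑ j, u j * d j = ∑ j, (u j + v j - c) * d j + ∑ j, v j * (- d j) + c * ∑ j, d j := by
    rw [Finset.mul_sum, ← Finset.sum_add_distrib, ← Finset.sum_add_distrib]
    apply Finset.sum_congr rfl
    intros; ring
  rw [R3, hd]; linarith

lemma swap_back {M : Type*} {m : ℕ} (Q : M ≃ Fin m) (x y : Fin m) :
    (Q.trans (Equiv.swap x y)).trans (Equiv.swap x y) = Q := by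
  ext j; simp

/-- **Theorem 1 (Local sufficiency for partial strategyproofness).**
Given a setting `(N, M, q)` and a bound `r ∈ [0,1]`, if a mechanism `φ` is
`r`-locally partially strategyproof, then it is `r²`-partially strategyproof. -/
theorem local_sufficiency_psp
    {N M : Type*} [Fintype N] [DecidableEq N] [Fintype M] [DecidableEq M] [Nonempty M]
    {m : ℕ} (hm : Fintype.card M = m)
    (q : M → ℕ) (hq : ∀ j, 1 ≤ q j) (hcap : Fintype.card N ≤ ∑ j, q j)
    (r : ℝ) (hr : r ∈ Set.Icc (0 : ℝ) 1)
    (φ : (N → M ≃ Fin m) → N → M → ℝ) (hφ : Feasible q φ)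
    (hloc : LocalPSP φ r) :
    PSP φ (r ^ 2) := by
  intro Pr i P' u hu0 hc hu
  obtain ⟨hr0, hr1⟩ := hr
  rcases hr0.eq_or_lt with hr0 | hr0
  · subst hr0
    have hu' : URBI u 0 := by simpa using hu
    have hm2 : m ≤ 2 := by
      by_contra hlt
      push Not at hlt
      set P := Pr i
      have c1 := hc (P.symm ⟨0, by omega⟩) (P.symm ⟨1, by omega⟩) (by simp)
      have c2 := hc (P.symm ⟨1, by omega⟩) (P.symm ⟨2, by omega⟩) (by simp)
      have := hu' _ _ c1
      have := minU_le' u (P.symm ⟨2, by omega⟩)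
      linarith
    by_cases hP : P' = Pr i
    · rw [hP, Function.update_eq_self]
    · refine hloc Pr i P' ?_ u hu0 hc hu'
      have hm1 : m = 2 := by
        by_contra hne
        apply hP
        ext j
        have := (P' j).2
        have := (Pr i j).2
        omega
      subst hm1
      refine ⟨0, by omega, ?_⟩
      have key : ∀ s : Equiv.Perm (Fin 2), s = 1 ∨ s = Equiv.swap 0 1 := by decide
      rcases key ((Pr i).symm.trans P') with h | h
      · exfalso; apply hP
        ext j
        have := congrArg (fun s : Equiv.Perm (Fin 2) => s (Pr i j)) h
        simp at this
        rw [this]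
      · ext j
        have := congrArg (fun s : Equiv.Perm (Fin 2) => s (Pr i j)) h
        simp at this
        rw [this]; rfl
  set P := Pr i with hPdef
  set U : (M ≃ Fin m) → ℝ := fun Q => ∑ j, u j * φ (Function.update Pr i Q) i j with hU
  have hstep : ∀ (Q : M ≃ Fin m) (k : ℕ) (hk : k + 1 < m),
      P (Q.symm ⟨k, Nat.lt_of_succ_lt hk⟩) < P (Q.symm ⟨k + 1, hk⟩) →
      (∀ x y : Fin m, k ≤ x.1 → x.1 ≠ k + 1 → y.1 ≠ k + 1 → x < y →
        P (Q.symm x) < P (Q.symm y)) →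
      U (Q.trans (Equiv.swap ⟨k, Nat.lt_of_succ_lt hk⟩ ⟨k + 1, hk⟩)) ≤ U Q := by
    intro Q k hk hab hlow
    set Q' := Q.trans (Equiv.swap ⟨k, Nat.lt_of_succ_lt hk⟩ ⟨k + 1, hk⟩) with hQ'
    have hsub : ∀ v : M → ℝ, ∑ j, v j * (φ (Function.update Pr i Q') i j -
        φ (Function.update Pr i Q) i j) = ∑ j, v j * φ (Function.update Pr i Q') i j -
        ∑ j, v j * φ (Function.update Pr i Q) i j := by
      intro v
      rw [← Finset.sum_sub_distrib]
      apply Finset.sum_congr rfl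
      intros; ring
    have := step_lemma P Q r hr0 hr1 u hc hu k hk hab hlow
      (fun j => φ (Function.update Pr i Q') i j - φ (Function.update Pr i Q) i j)
      (by rw [Finset.sum_sub_distrib, (hφ _).2.1, (hφ _).2.1, sub_self])
      (by
        intro v v0 v1 v2
        rw [hsub]
        have := hloc (Function.update Pr i Q) i Q' (by
          rw [Function.update_self]; exact ⟨k, hk, hQ'⟩) v v0 (by rwa [Function.update_self]) v2
        rw [Function.update_idem] at this
        linarith)
      (by
        intro v v0 v1 v2
        rw [hsub]
        have := hloc (Function.update Pr i Q') i Q (by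
          rw [Function.update_self]; exact ⟨k, hk, by rw [hQ', swap_back]⟩) v v0
          (by rwa [Function.update_self]) v2
        rw [Function.update_idem] at this
        linarith)
    rw [hsub] at this
    simp only [hU]; linarith
  -- inner bubbling
  have inner : ∀ (k : ℕ) (hk : k < m) (s : ℕ) (hs : k + s < m) (Q : M ≃ Fin m), U Q ≤ U P →
      (∀ x : Fin m, x.1 < k → Q.symm x = P'.symm x) →
      Q.symm ⟨k + s, hs⟩ = P'.symm ⟨k, hk⟩ →
      (∀ x y : Fin m, k ≤ x.1 → x.1 ≠ k + s → y.1 ≠ k + s → x < y →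
        P (Q.symm x) < P (Q.symm y)) →
      (∀ x : Fin m, k ≤ x.1 → x.1 < k + s → P (Q.symm x) < P (Q.symm ⟨k + s, hs⟩)) →
      ∃ Q : M ≃ Fin m, U Q ≤ U P ∧ (∀ x : Fin m, x.1 < k + 1 → Q.symm x = P'.symm x) ∧
        (∀ x y : Fin m, k + 1 ≤ x.1 → x < y → P (Q.symm x) < P (Q.symm y)) := by
    intro k hk s
    induction s with
    | zero =>
      intro hs Q hUQ t1 t2 t3 t4
      refine ⟨Q, hUQ, ?_, ?_⟩
      · intro x hx
        rcases Nat.lt_succ_iff_lt_or_eq.mp hx with h | h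
        · exact t1 x h
        · have : x = ⟨k, hk⟩ := Fin.ext h
          rw [this]; exact t2
      · intro x y hx hxy
        have := Fin.lt_def.mp hxy
        exact t3 x y (by omega) (by omega) (by omega) hxy
    | succ s ih =>
      intro hs Q hUQ t1 t2 t3 t4
      have hs' : k + s + 1 < m := by omega
      have hst := hstep Q (k + s) hs' (t4 ⟨k + s, by omega⟩ (by simp) (by simp))
        (fun x y a1 a2 a3 a4 => t3 x y (by omega) (by omega) (by omega) a4)
      set X : Fin m := ⟨k + s, by omega⟩ with hX
      set Y : Fin m := ⟨k + s + 1, hs'⟩ with hY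
      have sy : ∀ x, (Q.trans (Equiv.swap X Y)).symm x = Q.symm (Equiv.swap X Y x) := by
        intro x; simp
      have sX : Equiv.swap X Y X = Y := Equiv.swap_apply_left _ _
      have sY : Equiv.swap X Y Y = X := Equiv.swap_apply_right _ _
      have sO : ∀ x : Fin m, x.1 ≠ k + s → x.1 ≠ k + s + 1 → Equiv.swap X Y x = x :=
        fun x a1 a2 => Equiv.swap_apply_of_ne_of_ne (fun h => a1 (by rw [h]))
          (fun h => a2 (by rw [h]))
      refine ih (by omega) (Q.trans (Equiv.swap X Y)) (hst.trans hUQ) ?_ ?_ ?_ ?_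
      · intro x hx
        rw [sy, sO x (by omega) (by omega)]; exact t1 x hx
      · rw [sy]
        change Q.symm (Equiv.swap X Y X) = _
        rw [sX]; exact t2
      · intro x y a1 a2 a3 a4
        have a5 := Fin.lt_def.mp a4
        rw [sy, sy]
        by_cases b1 : x.1 = k + s + 1
        · have : x = Y := Fin.ext b1
          rw [this, sY, sO y (by omega) (by omega)]
          exact t3 X y (by simp [hX]) (by simp [hX]) (by omega)
            (Fin.lt_def.mpr (by simp only [hX]; omega))
        · rw [sO x a2 b1]
          by_cases b2 : y.1 = k + s + 1
          · have : y = Y := Fin.ext b2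
            rw [this, sY]
            exact t3 x X a1 (by omega) (by simp [hX])
              (Fin.lt_def.mpr (by simp only [hX]; omega))
          · rw [sO y a3 b2]
            exact t3 x y a1 (by omega) (by omega) a4
      · intro x a1 a2
        rw [sy, sy, sO x (by omega) (by omega)]
        change _ < P (Q.symm (Equiv.swap X Y X))
        rw [sX]
        exact t4 x a1 (by omega)
  have outer : ∀ k : ℕ, k ≤ m → ∃ Q : M ≃ Fin m, U Q ≤ U P ∧
      (∀ x : Fin m, x.1 < k → Q.symm x = P'.symm x) ∧
        (∀ x y : Fin m, k ≤ x.1 → x < y → P (Q.symm x) < P (Q.symm y)) := by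
    intro k
    induction k with
    | zero =>
      intro _
      refine ⟨P, le_rfl, fun x hx => absurd hx (by omega), ?_⟩
      intro x y _ h; simpa using h
    | succ k ih =>
      intro hk
      obtain ⟨Q, hUQ, t1, t2⟩ := ih (by omega)
      have hk' : k < m := by omega
      set b := P'.symm ⟨k, hk'⟩ with hb
      have hge : k ≤ (Q b).1 := by
        by_contra hlt
        push Not at hlt
        have := t1 (Q b) hlt
        rw [Equiv.symm_apply_apply, hb] at this
        have := congrArg Fin.val (P'.symm.injective this)
        simp only at this
        rw [← hb] at this
        omega
      obtain ⟨s, hs⟩ := Nat.exists_eq_add_of_le hge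
      have hsm : k + s < m := by rw [← hs]; exact (Q b).2
      have hQb : (⟨k + s, hsm⟩ : Fin m) = Q b := Fin.ext hs.symm
      refine inner k hk' s hsm Q hUQ t1 ?_ ?_ ?_
      · rw [hQb, Equiv.symm_apply_apply]
      · intro x y a1 _ _ a4; exact t2 x y a1 a4
      · intro x a1 a2; exact t2 x _ a1 (Fin.lt_def.mpr a2)
  obtain ⟨Q, hUQ, t1, _⟩ := outer m le_rfl
  have hQP : Q = P' := by
    have : Q.symm = P'.symm := Equiv.ext (fun x => t1 x x.2)
    simpa using congrArg Equiv.symm this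
  rw [hQP] at hUQ
  simp only [hU, hPdef, Function.update_eq_self] at hUQ
  exact hUQ
end

section
/- Given a setting (N,M,q), if a mechanism φ is r-locally partially strategyproof for some r > 0, then φ is r'-partially strategyproof for some r' > 0. -/
open Finset

theorem aux_core {m : ℕ} (w d : Fin m → ℝ) (k : Fin m) (ρ : ℝ) (hρ : 0 ≤ ρ)
    (hd : ∀ j < k, d j = 0) (hw : ∀ j, 0 ≤ w j) (hwk : ∀ j, k < j → w j ≤ ρ * w k) :
    w k * (d k - ρ * ∑ j, |d j|) ≤ ∑ j, w j * d j := by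
  have h1 : w k * (d k - ρ * ∑ j, |d j|)
      = ∑ j, ((if j = k then w k * d k else 0) - ρ * w k * |d j|) := by
    rw [Finset.sum_sub_distrib, ← Finset.mul_sum]
    simp
    ring
  rw [h1]
  apply Finset.sum_le_sum
  intro j _
  have hp : 0 ≤ ρ * w k := mul_nonneg hρ (hw k)
  rcases lt_trichotomy j k with h | h | h
  · simp [hd j h, h.ne]
  · subst h
    simp only [if_true]
    have := mul_nonneg hp (abs_nonneg (d j))
    linarith
  · rw [if_neg h.ne']
    have h2 := hwk j h
    have h3 : -(w j * d j) ≤ w j * |d j| := by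
      rw [← mul_neg]
      exact mul_le_mul_of_nonneg_left (neg_le_abs _) (hw j)
    have h4 := mul_le_mul_of_nonneg_right h2 (abs_nonneg (d j))
    linarith

theorem aux_swap {m : ℕ} (g1 g2 : Fin m → ℝ) (k : ℕ) (h : k + 1 < m)
    (i1 i2 : Fin m) (s : Equiv.Perm (Fin m))
    (hs : s = Equiv.swap ⟨k, Nat.lt_of_succ_lt h⟩ ⟨k + 1, h⟩)
    (h1 : ∀ j < i1, g2 j = g1 j) (h1' : g2 i1 < g1 i1)
    (h2 : ∀ j < i2, g1 (s j) = g2 (s j)) (h2' : g1 (s i2) < g2 (s i2)) :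
    (∀ j : Fin m, (j : ℕ) < k → g1 j = g2 j) ∧ g1 ⟨k + 1, h⟩ < g2 ⟨k + 1, h⟩ := by
  have hk : s ⟨k, Nat.lt_of_succ_lt h⟩ = ⟨k + 1, h⟩ := by rw [hs]; simp
  have hk1 : s ⟨k + 1, h⟩ = ⟨k, Nat.lt_of_succ_lt h⟩ := by rw [hs]; simp
  have ho : ∀ j : Fin m, (j : ℕ) ≠ k → (j : ℕ) ≠ k + 1 → s j = j := by
    intro j ha hb
    rw [hs]
    apply Equiv.swap_apply_of_ne_of_ne <;> simpa [Fin.ext_iff]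
  -- not both below
  have hge1 : ¬ (i1 : ℕ) < k := by
    intro hlt
    have e1 := ho i1 (by omega) (by omega)
    rcases lt_trichotomy i1 i2 with hh | hh | hh
    · have := h2 i1 hh; rw [e1] at this; linarith
    · subst hh; rw [e1] at h2'; linarith
    · have hh' : (i2 : ℕ) < i1 := hh
      have e2 := ho i2 (by omega) (by omega)
      rw [e2] at h2'
      have := h1 i2 hh; linarith
  have hge2 : ¬ (i2 : ℕ) < k := by
    intro hlt
    have e2 := ho i2 (by omega) (by omega)
    rw [e2] at h2'
    have := h1 i2 (Fin.lt_def.2 (by omega)); linarith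
  have hle2 : ¬ k < (i2 : ℕ) := by
    intro hlt
    have e1 := h2 ⟨k, Nat.lt_of_succ_lt h⟩ (Fin.lt_def.2 hlt)
    rw [hk] at e1
    by_cases hc : (i2 : ℕ) = k + 1
    · have : i2 = ⟨k + 1, h⟩ := Fin.ext hc
      rw [this, hk1] at h2'
      by_cases hi : (i1 : ℕ) = k
      · have : i1 = ⟨k, Nat.lt_of_succ_lt h⟩ := Fin.ext hi
        rw [this] at h1'; linarith
      · have := h1 ⟨k, Nat.lt_of_succ_lt h⟩ (Fin.lt_def.2 (by simp; omega)); linarith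
    · have e2 := ho i2 (by omega) hc
      rw [e2] at h2'
      have e3 := h2 ⟨k + 1, h⟩ (Fin.lt_def.2 (by simp; omega))
      rw [hk1] at e3
      rcases lt_trichotomy i1 i2 with hh | hh | hh
      · by_cases ha : (i1 : ℕ) = k
        · have : i1 = ⟨k, Nat.lt_of_succ_lt h⟩ := Fin.ext ha
          rw [this] at h1'; linarith
        · by_cases hb : (i1 : ℕ) = k + 1
          · have : i1 = ⟨k + 1, h⟩ := Fin.ext hb
            rw [this] at h1'; linarith
          · have := h2 i1 hh
            rw [ho i1 ha hb] at this; linarith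
      · subst hh; linarith
      · have := h1 i2 hh; linarith
  have hi2 : i2 = ⟨k, Nat.lt_of_succ_lt h⟩ := Fin.ext (by simp; omega)
  subst hi2
  rw [hk] at h2'
  refine ⟨fun j hj => ?_, h2'⟩
  have := h2 j (Fin.lt_def.2 hj)
  rwa [ho j (by omega) (by omega)] at this

/-- ordinal global lemma -/
theorem aux_global {M : Type*} {m : ℕ} (f : (M ≃ Fin m) → M → ℝ)
    (H : ∀ (Q : M ≃ Fin m) (k : ℕ) (h : k + 1 < m),
      f Q = f (Q.trans (Equiv.swap ⟨k, Nat.lt_of_succ_lt h⟩ ⟨k + 1, h⟩)) ∨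
      ((∀ o, (Q o : ℕ) < k →
        f Q o = f (Q.trans (Equiv.swap ⟨k, Nat.lt_of_succ_lt h⟩ ⟨k + 1, h⟩)) o) ∧
       ∀ o, (Q o : ℕ) = k + 1 →
        f Q o < f (Q.trans (Equiv.swap ⟨k, Nat.lt_of_succ_lt h⟩ ⟨k + 1, h⟩)) o))
    (P : M ≃ Fin m) (a : Lex (Fin m → Fin m)) :
    ∀ Q : M ≃ Fin m, toLex (fun k => Q (P.symm k)) = a →
    toLex (fun k => f Q (P.symm k)) ≤ toLex (fun k => f P (P.symm k)) := by
  induction a using WellFoundedLT.induction with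
  | ind a ih =>
  intro Q hQ
  by_cases hQP : ∀ j, Q (P.symm j) = j
  · have : Q = P := by
      ext o
      have := hQP (P o)
      simp at this
      rw [this]
    rw [this]
  · push Not at hQP
    obtain ⟨j, hj, hmin⟩ := WellFounded.has_min (wellFounded_lt (α := Fin m))
      {j | Q (P.symm j) ≠ j} hQP
    have hmin' : ∀ i < j, Q (P.symm i) = i := by
      intro i hi
      by_contra hc
      exact hmin i hc hi
    have hgt : j < Q (P.symm j) := by
      rcases lt_trichotomy j (Q (P.symm j)) with hh | hh | hh
      · exact hh
      · exact absurd hh.symm hj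
      · exfalso
        have := hmin' _ hh
        exact hj (P.symm.injective (Q.injective this))
    have hgt' : (j : ℕ) < (Q (P.symm j) : ℕ) := hgt
    obtain ⟨p, hp⟩ : ∃ p : ℕ, (Q (P.symm j) : ℕ) = p + 1 := ⟨(Q (P.symm j) : ℕ) - 1, by omega⟩
    have h : p + 1 < m := hp ▸ (Q (P.symm j)).isLt
    have hQj : Q (P.symm j) = ⟨p + 1, h⟩ := Fin.ext hp
    have hstep := H Q p h
    set Q' := Q.trans (Equiv.swap ⟨p, Nat.lt_of_succ_lt h⟩ ⟨p + 1, h⟩) with hQ'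
    have hlt : toLex (fun k => Q' (P.symm k)) < a := by
      rw [← hQ]
      refine ⟨j, fun i hi => ?_, ?_⟩
      · have hi' : (i : ℕ) < j := hi
        show Q' (P.symm i) = Q (P.symm i)
        rw [hQ', Equiv.trans_apply, hmin' i hi]
        apply Equiv.swap_apply_of_ne_of_ne
        · intro hh
          have := congrArg Fin.val hh
          simp at this; omega
        · intro hh
          have := congrArg Fin.val hh
          simp at this; omega
      · show Q' (P.symm j) < Q (P.symm j)
        rw [hQ', Equiv.trans_apply, hQj, Equiv.swap_apply_right]
        exact Fin.lt_def.2 (by simp)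
    refine le_trans ?_ (ih _ hlt Q' rfl)
    rcases hstep with he | ⟨he, hl⟩
    · rw [he]
    · apply le_of_lt
      refine ⟨j, fun i hi => ?_, ?_⟩
      · have hi' : (i : ℕ) < j := hi
        apply he
        rw [hmin' i hi]; omega
      · exact hl _ hp

theorem aux_lex_of_local {M : Type*} [Fintype M] [Nonempty M] {m : ℕ} (r : ℝ) (hr : 0 < r)
    (P : M ≃ Fin m) (x y : M → ℝ)
    (H : ∀ u : M → ℝ, (∀ j, 0 ≤ u j) → Consistent u P → URBI u r →
      ∑ j, u j * y j ≤ ∑ j, u j * x j) :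
    toLex (fun k => y (P.symm k)) ≤ toLex (fun k => x (P.symm k)) := by
  by_contra hc
  rw [not_le] at hc
  obtain ⟨k, hk, hk'⟩ := hc
  change ∀ j < k, x (P.symm j) = y (P.symm j) at hk
  change x (P.symm k) < y (P.symm k) at hk'
  set d : Fin m → ℝ := fun j => y (P.symm j) - x (P.symm j) with hd
  set C := ∑ j, |d j| with hC
  have hC0 : 0 ≤ C := Finset.sum_nonneg (fun _ _ => abs_nonneg _)
  have hdk : 0 < d k := sub_pos.2 hk'
  obtain ⟨ε, hε0, hε⟩ : ∃ ε : ℝ, 0 < ε ∧ ε < min (min r 1) (d k / (C + 1)) :=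
    exists_between (lt_min (lt_min hr one_pos) (by positivity))
  have hεr : ε < r := lt_of_lt_of_le hε ((min_le_left _ _).trans (min_le_left _ _))
  have hε1 : ε < 1 := lt_of_lt_of_le hε ((min_le_left _ _).trans (min_le_right _ _))
  have hεC : ε * C < d k := by
    have := (lt_div_iff₀ (by positivity)).1 (lt_of_lt_of_le hε (min_le_right _ _))
    nlinarith
  have hcons : Consistent (fun j => ε ^ (P j : ℕ)) P := by
    intro a b hab
    exact pow_lt_pow_right_of_lt_one₀ hε0 hε1 hab
  have hmono : ∀ a b : ℕ, a < b → ε ^ b ≤ ε * ε ^ a := by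
    intro a b hab
    rw [← pow_succ']
    exact pow_le_pow_of_le_one hε0.le hε1.le hab
  have hu := H (fun j => ε ^ (P j : ℕ)) (fun j => by positivity) hcons (by
    intro a b hab
    set μ := minU (fun j => ε ^ (P j : ℕ)) with hμ
    have hμ0 : 0 ≤ μ := by
      apply Finset.le_inf'
      intro j _
      positivity
    have hμa : μ ≤ ε ^ (P a : ℕ) :=
      Finset.inf'_le (fun j => ε ^ (P j : ℕ)) (Finset.mem_univ a)
    have hPab : (P a : ℕ) < P b := by
      by_contra hcc
      exact absurd hab (not_lt.2 (pow_le_pow_of_le_one hε0.le hε1.le (not_lt.1 hcc)))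
    have h1 := hmono _ _ hPab
    show ε ^ (P b : ℕ) - μ ≤ r * (ε ^ (P a : ℕ) - μ)
    nlinarith [mul_le_mul_of_nonneg_right hεr.le (sub_nonneg.2 hμa)])
  have hcore := aux_core (fun j : Fin m => ε ^ (j : ℕ)) d k ε hε0.le
    (fun j hj => by simp [hd, hk j hj]) (fun j => by positivity)
    (fun j hj => hmono _ _ hj)
  have hsum : ∑ j : Fin m, ε ^ (j : ℕ) * d j
      = ∑ j, ε ^ (P j : ℕ) * y j - ∑ j, ε ^ (P j : ℕ) * x j := by
    rw [← Finset.sum_sub_distrib, ← Equiv.sum_comp P]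
    apply Finset.sum_congr rfl
    intro j _
    simp [hd]
    ring
  have hpos : 0 < ε ^ (k : ℕ) * (d k - ε * ∑ j, |d j|) :=
    mul_pos (by positivity) (by linarith)
  linarith

theorem aux_psp_of_lex {M : Type*} [Fintype M] [Nonempty M] {m : ℕ}
    (P : M ≃ Fin m) (x y : M → ℝ) (hx : ∑ j, x j = 1) (hy : ∑ j, y j = 1)
    (hl : toLex (fun k => y (P.symm k)) ≤ toLex (fun k => x (P.symm k))) :
    ∃ r : ℝ, 0 < r ∧ ∀ r' ≤ r, 0 < r' → ∀ u : M → ℝ, Consistent u P → URBI u r' →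
      ∑ j, u j * y j ≤ ∑ j, u j * x j := by
  rcases hl.eq_or_lt with he | hlt
  · have : y = x := by
      ext o
      have := congrFun (toLex.injective he) (P o)
      simpa using this
    exact ⟨1, one_pos, fun _ _ _ u _ _ => by rw [this]⟩
  obtain ⟨k, hk, hk'⟩ := hlt
  change ∀ j < k, y (P.symm j) = x (P.symm j) at hk
  change y (P.symm k) < x (P.symm k) at hk'
  set d : Fin m → ℝ := fun j => x (P.symm j) - y (P.symm j) with hd
  set C := ∑ j, |d j| with hC
  have hC0 : 0 ≤ C := Finset.sum_nonneg (fun _ _ => abs_nonneg _)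
  have hdk : 0 < d k := sub_pos.2 hk'
  refine ⟨d k / (C + 1), by positivity, fun r' hr' hr0 u hu hU => ?_⟩
  have hrC : r' * C ≤ d k := by
    have := (le_div_iff₀ (by positivity)).1 hr'
    nlinarith
  have hμ : ∀ j, 0 ≤ u j - minU u := fun j =>
    sub_nonneg.2 (Finset.inf'_le u (Finset.mem_univ j))
  have hcore := aux_core (fun j : Fin m => u (P.symm j) - minU u) d k r' hr0.le
    (fun j hj => by simp [hd, hk j hj]) (fun j => hμ _)
    (fun j hj => hU _ _ (hu _ _ (by simpa using hj)))
  have hsum : ∑ j : Fin m, (u (P.symm j) - minU u) * d j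
      = ∑ j, u j * x j - ∑ j, u j * y j := by
    have e : ∑ j, u j * x j - ∑ j, u j * y j
        = ∑ j, u j * x j - ∑ j, u j * y j - minU u * (∑ j, x j - ∑ j, y j) := by
      rw [hx, hy]; ring
    rw [e, ← Finset.sum_sub_distrib, ← Finset.sum_sub_distrib, Finset.mul_sum,
      ← Finset.sum_sub_distrib, ← Equiv.sum_comp P]
    apply Finset.sum_congr rfl
    intro j _
    simp [hd]
    ring
  have hpos : 0 ≤ (u (P.symm k) - minU u) * (d k - r' * ∑ j, |d j|) :=
    mul_nonneg (hμ _) (by linarith)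
  linarith

/-- **Corollary 1 (Weak local sufficiency).**
Given a setting `(N, M, q)`, if a mechanism `φ` is `r`-locally partially
strategyproof for some `r > 0`, then it is `r'`-partially strategyproof
for some `r' > 0`. -/
theorem weak_local_sufficiency_psp
    {N M : Type*} [Fintype N] [DecidableEq N] [Fintype M] [DecidableEq M] [Nonempty M]
    {m : ℕ} (hm : Fintype.card M = m)
    (q : M → ℕ) (hq : ∀ j, 1 ≤ q j) (hcap : Fintype.card N ≤ ∑ j, q j)
    (r : ℝ) (hr : 0 < r)
    (φ : (N → M ≃ Fin m) → N → M → ℝ) (hφ : Feasible q φ)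
    (hloc : LocalPSP φ r) :
    ∃ r' : ℝ, 0 < r' ∧ PSP φ r' := by
  classical
  have hlex : ∀ (P : N → M ≃ Fin m) (i : N) (P' : M ≃ Fin m),
      toLex (fun k => φ (Function.update P i P') i ((P i).symm k))
        ≤ toLex (fun k => φ P i ((P i).symm k)) := by
    intro P i P'
    set f : (M ≃ Fin m) → M → ℝ := fun Q => φ (Function.update P i Q) i with hf
    have hL : ∀ Q Q' : M ≃ Fin m, Nbhd Q Q' →
        toLex (fun k => f Q' (Q.symm k)) ≤ toLex (fun k => f Q (Q.symm k)) := by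
      intro Q Q' hn
      apply aux_lex_of_local r hr
      intro u hu0 huc huU
      have := hloc (Function.update P i Q) i Q' (by simpa using hn) u hu0 (by simpa using huc) huU
      simpa [hf] using this
    have hG := aux_global f (by
      intro Q k h
      set s : Equiv.Perm (Fin m) := Equiv.swap ⟨k, Nat.lt_of_succ_lt h⟩ ⟨k + 1, h⟩ with hs
      have ha := hL Q (Q.trans s) ⟨k, h, rfl⟩
      have hb := hL (Q.trans s) Q ⟨k, h, by
        ext o
        simp [hs]⟩
      have hss : s.symm = s := by rw [hs, Equiv.symm_swap]
      rcases ha.eq_or_lt with he | hlt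
      · left
        ext o
        have := congrFun (toLex.injective he) (Q o)
        simpa using this.symm
      rcases hb.eq_or_lt with he | hlt2
      · left
        ext o
        have := congrFun (toLex.injective he) ((Q.trans s) o)
        simpa using this
      right
      obtain ⟨i1, h1, h1'⟩ := hlt
      obtain ⟨i2, h2, h2'⟩ := hlt2
      have hsym : ∀ j, (Q.trans s).symm j = Q.symm (s j) := by
        intro j
        rw [Equiv.symm_trans_apply, hss]
      have hres := aux_swap (fun j => f Q (Q.symm j)) (fun j => f (Q.trans s) (Q.symm j)) k h
        i1 i2 s hs h1 h1'
        (fun j hj => by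
          have := h2 j hj
          change f Q ((Q.trans s).symm j) = f (Q.trans s) ((Q.trans s).symm j) at this
          rwa [hsym] at this)
        (by
          change f Q ((Q.trans s).symm i2) < f (Q.trans s) ((Q.trans s).symm i2) at h2'
          rwa [hsym] at h2')
      refine ⟨fun o ho => ?_, fun o ho => ?_⟩
      · simpa using hres.1 (Q o) ho
      · have e : Q o = ⟨k + 1, h⟩ := Fin.ext ho
        have := hres.2
        rw [← e] at this
        simpa using this) (P i) _ P' rfl
    simpa [hf] using hG
  have hex : ∀ t : (N → M ≃ Fin m) × N × (M ≃ Fin m), ∃ r₀ : ℝ, 0 < r₀ ∧ ∀ r' ≤ r₀, 0 < r' →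
      ∀ u : M → ℝ, Consistent u (t.1 t.2.1) → URBI u r' →
      ∑ j, u j * φ (Function.update t.1 t.2.1 t.2.2) t.2.1 j ≤ ∑ j, u j * φ t.1 t.2.1 j :=
    fun t => aux_psp_of_lex (t.1 t.2.1) _ _ ((hφ _).2.1 _) ((hφ _).2.1 _) (hlex _ _ _)
  choose ρ hρ0 hρ using hex
  rcases isEmpty_or_nonempty ((N → M ≃ Fin m) × N × (M ≃ Fin m)) with hE | hNE
  · exact ⟨1, one_pos, fun P i P' => (hE.false (P, i, P')).elim⟩
  · obtain ⟨t0, ht0⟩ := Finite.exists_min ρ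
    exact ⟨ρ t0, hρ0 t0, fun P i P' u _ huc huU =>
      hρ (P, i, P') (ρ t0) (ht0 _) (hρ0 t0) u huc huU⟩
end

section
/- If a mechanism φ is locally SD-strategyproof, i.e., for all agents i, all preference profiles (P_i,P_{−i}), and all misreports P_i' in the neighborhood N_{P_i}, the assignment vector φ_i(P_i,P_{−i}) stochastically dominates φ_i(P_i',P_{−i}) at P_i, then φ is SD-strategyproof, i.e., the same stochastic dominance holds for all misreports P_i' ∈ 𝒫. -/
open Finset

/-- `x` stochastically dominates `y` at the preference order `P`. -/
def SDom {M : Type*} [Fintype M] {m : ℕ} (P : M ≃ Fin m) (x y : M → ℝ) : Prop :=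
  ∀ j : M, ∑ j' ∈ Finset.univ.filter (fun j' => P j' ≤ P j), y j'
    ≤ ∑ j' ∈ Finset.univ.filter (fun j' => P j' ≤ P j), x j'


/-- prefix sum -/
def preS {M : Type*} [Fintype M] {m : ℕ} (Q : M ≃ Fin m) (x : M → ℝ) (n : ℕ) : ℝ :=
  ∑ j ∈ Finset.univ.filter (fun j => (Q j).val < n), x j

theorem preS_succ {M : Type*} [Fintype M] [DecidableEq M] {m : ℕ} (Q : M ≃ Fin m) (x : M → ℝ)
    (c : M) : preS Q x ((Q c).val + 1) = preS Q x (Q c).val + x c := by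
  unfold preS
  have : Finset.univ.filter (fun j => (Q j).val < (Q c).val + 1)
      = insert c (Finset.univ.filter (fun j => (Q j).val < (Q c).val)) := by
    ext j
    simp only [Finset.mem_filter, Finset.mem_univ, true_and, Finset.mem_insert]
    rw [← Q.injective.eq_iff, Fin.ext_iff]
    omega
  rw [this, Finset.sum_insert (by simp)]
  ring

theorem preS_le {M : Type*} [Fintype M] {m : ℕ} (Q : M ≃ Fin m) (x y : M → ℝ)
    (h : SDom Q x y) (n : ℕ) (hn : n ≤ m) : preS Q y n ≤ preS Q x n := by
  rcases n with _ | n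
  · simp [preS]
  · have := h (Q.symm ⟨n, hn⟩)
    simpa [preS, Fin.le_def, Nat.lt_succ_iff] using this

theorem one_step {M : Type*} [Fintype M] [DecidableEq M] {m : ℕ} (Q Q' : M ≃ Fin m)
    (x y : M → ℝ) (a b : M) (hk : (Q a).val = (Q b).val + 1)
    (hQ' : Q' = Q.trans (Equiv.swap (Q b) (Q a)))
    (h1 : SDom Q x y) (h2 : SDom Q' y x) (U : Finset M) (hU : b ∈ U → a ∈ U) :
    ∑ j ∈ U, x j ≤ ∑ j ∈ U, y j := by
  have ha' : Q' a = Q b := by simp [hQ']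
  have hb' : Q' b = Q a := by simp [hQ']
  have hc' : ∀ c, c ≠ a → c ≠ b → Q' c = Q c := by
    intro c h h'
    simp only [hQ', Equiv.trans_apply]
    exact Equiv.swap_apply_of_ne_of_ne (Q.injective.ne h') (Q.injective.ne h)
  have hpre : ∀ (z : M → ℝ) n, n ≠ (Q a).val → preS Q' z n = preS Q z n := by
    intro z n hn
    unfold preS
    congr 1
    ext j
    simp only [Finset.mem_filter, Finset.mem_univ, true_and]
    by_cases h : j = a
    · subst h; rw [ha']; omega
    by_cases h' : j = b
    · subst h'; rw [hb']; omega
    rw [hc' j h h']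
  have heq : ∀ n, n ≤ m → n ≠ (Q a).val → preS Q x n = preS Q y n := by
    intro n hn hne
    have e1 := preS_le Q x y h1 n hn
    have e2 := preS_le Q' y x h2 n hn
    rw [hpre _ _ hne, hpre _ _ hne] at e2
    linarith
  have hba : a ≠ b := by rintro rfl; omega
  have hla := (Q a).isLt
  have hxc : ∀ c, c ≠ a → c ≠ b → x c = y c := by
    intro c h h'
    have n1 : (Q c).val ≠ (Q a).val := fun e => h (Q.injective (Fin.ext e))
    have n2 : (Q c).val ≠ (Q b).val := fun e => h' (Q.injective (Fin.ext e))
    have e1 := heq (Q c).val (Q c).isLt.le n1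
    have e2 := heq ((Q c).val + 1) (Q c).isLt (by omega)
    rw [preS_succ, preS_succ] at e2
    linarith
  have e0 := heq (Q b).val (by omega) (by omega)
  have e2 := heq ((Q a).val + 1) (by omega) (by omega)
  rw [preS_succ, preS_succ, hk, preS_succ, preS_succ] at e2
  have e1 := preS_le Q' y x h2 ((Q' a).val + 1) (Q' a).isLt
  rw [preS_succ, preS_succ, ha', hpre _ _ (by omega), hpre _ _ (by omega)] at e1
  have hs : ∑ j ∈ U, (y j - x j) = (if a ∈ U then y a - x a else 0)
      + (if b ∈ U then y b - x b else 0) := by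
    have : ∀ j ∈ U, y j - x j = (if a = j then y a - x a else 0)
        + (if b = j then y b - x b else 0) := by
      intro j _
      by_cases h : a = j
      · subst h; simp [hba.symm]
      by_cases h' : b = j
      · subst h'; simp [hba]
      simp [h, h', hxc j (Ne.symm h) (Ne.symm h')]
    rw [Finset.sum_congr rfl this, Finset.sum_add_distrib]
    simp
  rw [Finset.sum_sub_distrib] at hs
  by_cases hb : b ∈ U
  · simp only [hb, hU hb, if_true] at hs
    linarith
  · simp only [hb, if_false] at hs
    split_ifs at hs <;> linarith

theorem exists_inv {M : Type*} {m : ℕ} (P Q : M ≃ Fin m) (hne : Q ≠ P) :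
    ∃ a b : M, (Q a).val = (Q b).val + 1 ∧ P a < P b := by
  by_contra hcon
  push Not at hcon
  apply hne
  rcases m with _ | m
  · ext j; exact (Q j).elim0
  have hmono : StrictMono (Q.symm.trans P) := by
    rw [Fin.strictMono_iff_lt_succ]
    intro i
    refine lt_of_le_of_ne ?_ ?_
    · apply hcon; simp
    · intro h
      have := (Q.symm.trans P).injective h
      simp [Fin.ext_iff] at this
  have hid : (Q.symm.trans P : Fin (m+1) → Fin (m+1)) = id := by
    have := Subsingleton.elim (hmono.orderIsoOfSurjective _ (Q.symm.trans P).surjective)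
      (OrderIso.refl _)
    funext i
    exact congrArg (fun e => e i) this
  ext j
  have := congrFun hid (Q j)
  simp at this
  rw [this]

theorem measure_lt {M : Type*} [Fintype M] [DecidableEq M] {m : ℕ} (P Q : M ≃ Fin m) (a b : M)
    (hk : (Q a).val = (Q b).val + 1) (hP : P a < P b) :
    ∑ j, ((P j).val : ℤ) * ((Q j).val : ℤ)
      < ∑ j, ((P j).val : ℤ) * ((Q.trans (Equiv.swap (Q b) (Q a)) j).val : ℤ) := by
  have hba : a ≠ b := by rintro rfl; omega
  rw [← sub_pos, ← Finset.sum_sub_distrib]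
  have : ∀ j ∈ (Finset.univ : Finset M),
      ((P j).val : ℤ) * ((Q.trans (Equiv.swap (Q b) (Q a)) j).val : ℤ)
        - ((P j).val : ℤ) * ((Q j).val : ℤ)
      = (if a = j then -((P a).val : ℤ) else 0) + (if b = j then ((P b).val : ℤ) else 0) := by
    intro j _
    by_cases h : a = j
    · subst h; simp [hba.symm, hk]; ring
    by_cases h' : b = j
    · subst h'; simp [hba, hk]; ring
    simp only [Equiv.trans_apply]
    rw [Equiv.swap_apply_of_ne_of_ne (Q.injective.ne (Ne.symm h')) (Q.injective.ne (Ne.symm h))]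
    simp [h, h']
  rw [Finset.sum_congr rfl this, Finset.sum_add_distrib]
  simp
  exact hP

/-- **(Carroll 2012) Local sufficiency for SD-strategyproofness.**
If a mechanism `φ` is locally SD-strategyproof (truthful assignment stochastically
dominates the assignment under any misreport in the neighborhood of the truthful
preference order), then `φ` is SD-strategyproof (the same holds for all misreports). -/
theorem local_sufficiency_SD
    {N M : Type*} [Fintype N] [DecidableEq N] [Fintype M] [DecidableEq M]
    {m : ℕ} (hm : Fintype.card M = m)
    (q : M → ℕ) (hq : ∀ j, 1 ≤ q j) (hcap : Fintype.card N ≤ ∑ j, q j)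
    (φ : (N → M ≃ Fin m) → N → M → ℝ) (hφ : Feasible q φ)
    (hloc : ∀ (P : N → M ≃ Fin m) (i : N) (P' : M ≃ Fin m), Nbhd (P i) P' →
      SDom (P i) (φ P i) (φ (Function.update P i P') i)) :
    ∀ (P : N → M ≃ Fin m) (i : N) (P' : M ≃ Fin m),
      SDom (P i) (φ P i) (φ (Function.update P i P') i) := by
  intro P i P' j
  set U := Finset.univ.filter (fun j' => P i j' ≤ P i j) with hUdef
  let g : (M ≃ Fin m) → ℝ := fun Q => ∑ j' ∈ U, φ (Function.update P i Q) i j'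
  have hfin : ({Q | g P' ≤ g Q} : Set (M ≃ Fin m)).Finite := Set.toFinite _
  obtain ⟨Q, hQ, hmax⟩ := Set.exists_max_image _
    (fun Q : M ≃ Fin m => ∑ j, ((P i j).val : ℤ) * ((Q j).val : ℤ)) hfin ⟨P', le_refl (g P')⟩
  have hQP : Q = P i := by
    by_contra hne
    obtain ⟨a, b, hk, hab⟩ := exists_inv (P i) Q hne
    have hlt := measure_lt (P i) Q a b hk hab
    have hla := (Q a).isLt
    have hsw : Equiv.swap (⟨(Q b).val, by omega⟩ : Fin m) ⟨(Q b).val + 1, by omega⟩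
        = Equiv.swap (Q b) (Q a) := by
      congr 1
      exact Fin.ext hk.symm
    set Q' := Q.trans (Equiv.swap (Q b) (Q a)) with hQ'
    have hn1 : Nbhd Q Q' := ⟨(Q b).val, by omega, by rw [hsw]⟩
    have hn2 : Nbhd Q' Q := by
      refine ⟨(Q b).val, by omega, ?_⟩
      rw [hsw, hQ']
      ext t
      simp
    have h1 := hloc (Function.update P i Q) i Q' (by simpa using hn1)
    have h2 := hloc (Function.update P i Q') i Q (by simpa using hn2)
    simp only [Function.update_self, Function.update_idem] at h1 h2
    have hstep : g Q ≤ g Q' := one_step Q Q' _ _ a b hk hQ' h1 h2 U (by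
      simp only [hUdef, Finset.mem_filter, Finset.mem_univ, true_and]
      exact fun h => hab.le.trans h)
    have := hmax Q' (le_trans hQ hstep)
    exact absurd hlt (not_lt.mpr this)
  have h : g P' ≤ g Q := hQ
  simpa [g, hQP] using h
end

section
/- Let M be a finite set of m objects, P^T and P^F preference orders on M, and u a utility function consistent with P^T. For C > 1 define v(j) = C^{m − rank_{P^F}(j)} for j ∈ M. Then for all sufficiently large C, the sequence of preference orders that the line segment co(u,v) = {u_α : α ∈ [0,1]} passes, listed in increasing order of the parameters α at which u_α is consistent with them, is exactly the canonical (bubble-sort) transition from P^T to P^F. -/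
open Finset

/-- The convex combination `u_α = (1-α)·u + α·v`. -/
def mix {M : Type*} (u v : M → ℝ) (α : ℝ) : M → ℝ := fun j => (1 - α) * u j + α * v j

/-- Swap object `j` one position upward in the ranking `σ` (i.e. exchange it with the
object ranked directly above it). -/
def swapUp {M : Type*} [DecidableEq M] {m : ℕ} (σ : M ≃ Fin m) (j : M) : M ≃ Fin m :=
  σ.trans (Equiv.swap (σ j) ⟨(σ j : ℕ) - 1, lt_of_le_of_lt (Nat.sub_le _ 1) (σ j).isLt⟩)

/-- The list of preference orders obtained by swapping object `j` upward `k` times. -/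
def moveUp {M : Type*} [DecidableEq M] {m : ℕ} (j : M) :
    (M ≃ Fin m) → ℕ → List (M ≃ Fin m)
  | _, 0 => []
  | σ, k + 1 => swapUp σ j :: moveUp j (swapUp σ j) k

/-- Bubble-sort phases: for each target rank `t` (in increasing order), move the object
`τ.symm t` from its current position up to position `t`, one swap at a time. -/
def canonFrom {M : Type*} [DecidableEq M] {m : ℕ} (τ : M ≃ Fin m) :
    (M ≃ Fin m) → List (Fin m) → List (M ≃ Fin m)
  | _, [] => []
  | σ, t :: ts =>
      let L := moveUp (τ.symm t) σ ((σ (τ.symm t) : ℕ) - (t : ℕ))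
      L ++ canonFrom τ (L.getLast?.getD σ) ts

/-- The canonical (bubble-sort) transition from `σ` to `τ`: the sequence of preference
orders `P⁰ = σ, P¹, …, P^K = τ` produced by the bubble-sort algorithm. -/
def canonicalTransition {M : Type*} [DecidableEq M] {m : ℕ} (σ τ : M ≃ Fin m) :
    List (M ≃ Fin m) :=
  σ :: canonFrom τ σ (List.finRange m)

/-- The sequence of preference orders that `co(u,v)` passes, listed in increasing order
of the parameter `α`, is exactly the canonical transition from `PT` to `PF`:
a preference order is passed iff it belongs to the canonical transition list, and
the parameters at which consecutive members of the list are passed are increasing. -/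
def CanonicalPassing {M : Type*} [DecidableEq M] {m : ℕ}
    (u v : M → ℝ) (PT PF : M ≃ Fin m) : Prop :=
  (∀ P : M ≃ Fin m,
      (∃ α ∈ Set.Icc (0 : ℝ) 1, Consistent (mix u v α) P) ↔
        P ∈ canonicalTransition PT PF) ∧
  (∀ (k l : ℕ) (hk : k < (canonicalTransition PT PF).length)
      (hl : l < (canonicalTransition PT PF).length), k < l →
    ∀ α α' : ℝ, α ∈ Set.Icc (0 : ℝ) 1 → α' ∈ Set.Icc (0 : ℝ) 1 →
      Consistent (mix u v α) ((canonicalTransition PT PF).get ⟨k, hk⟩) →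
      Consistent (mix u v α') ((canonicalTransition PT PF).get ⟨l, hl⟩) →
      α < α')

section Helpers
variable {M : Type*} {m : ℕ}

inductive SChain (PF : M ≃ Fin m) (cr : M → M → ℝ) : (M ≃ Fin m) → ℝ → List (M ≃ Fin m) → Prop
  | nil (s : ℝ) : SChain PF cr PF s []
  | cons (σ σ' : M ≃ Fin m) (s : ℝ) (L : List (M ≃ Fin m)) (a b : M)
      (h1 : (σ a : ℕ) + 1 = σ b) (h2 : PF b < PF a) (ha : σ' a = σ b) (hb : σ' b = σ a)
      (ho : ∀ x, x ≠ a → x ≠ b → σ' x = σ x) (hs : s < cr a b)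
      (hc : SChain PF cr σ' (cr a b) L) : SChain PF cr σ s (σ' :: L)

lemma swap_lt (σ σ' : M ≃ Fin m) (a b : M)
      (h1 : (σ a : ℕ) + 1 = σ b) (ha : σ' a = σ b) (hb : σ' b = σ a)
      (ho : ∀ x, x ≠ a → x ≠ b → σ' x = σ x) (x y : M) (h : σ x < σ y) (hn : ¬ (x = a ∧ y = b)) :
      σ' x < σ' y := by
  classical
  have inj : ∀ z w : M, z ≠ w → (σ z : ℕ) ≠ σ w := fun z w hzw h =>
    hzw (σ.injective (Fin.ext h))
  have hxy : x ≠ y := by rintro rfl; exact lt_irrefl _ h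
  rw [Fin.lt_def] at *
  by_cases xa : x = a
  · subst xa
    have yb : y ≠ b := fun h => hn ⟨rfl, h⟩
    rw [ha, ho y hxy.symm yb]
    have := inj _ _ yb
    omega
  by_cases xb : x = b
  · subst xb
    have ya : y ≠ a := by rintro rfl; omega
    rw [hb, ho y ya hxy.symm]
    omega
  rw [ho x xa xb]
  by_cases ya : y = a
  · subst ya; rw [ha]; omega
  by_cases yb : y = b
  · subst yb; rw [hb]; have := inj _ _ xa; omega
  rw [ho y ya yb]; exact h

lemma SChain.cross_gt {PF : M ≃ Fin m} {cr : M → M → ℝ} {σ s L} (h : SChain PF cr σ s L) :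
    ∀ a b, σ a < σ b → PF b < PF a → s < cr a b := by
  induction h with
  | nil s => intro a b h1 h2; exact absurd h1 (lt_asymm h2)
  | cons σ σ' s L a b h1 h2 ha hb ho hs hc ih =>
    intro x y hxy hyx
    by_cases hn : x = a ∧ y = b
    · rw [hn.1, hn.2]; exact hs
    · exact hs.trans (ih x y (swap_lt σ σ' a b h1 ha hb ho x y hxy hn) hyx)

lemma SChain.inv_sub {PF : M ≃ Fin m} {cr : M → M → ℝ} {σ s L} (h : SChain PF cr σ s L) :
    ∀ P ∈ L, ∀ a b, σ b < σ a → PF b < PF a → P b < P a := by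
  induction h with
  | nil s => intro P hP; simp at hP
  | cons σ σ' s L a b h1 h2 ha hb ho hs hc ih =>
    intro P hP x y hxy hyx
    have hn : ¬ (y = a ∧ x = b) := by
      rintro ⟨rfl, rfl⟩; exact lt_asymm h2 hyx
    have := swap_lt σ σ' a b h1 ha hb ho y x hxy hn
    rcases List.mem_cons.1 hP with rfl | hP
    · exact this
    · exact ih P hP x y this hyx

lemma consistent_unique {f : M → ℝ} {P Q : M ≃ Fin m} (hP : Consistent f P)
    (hQ : Consistent f Q) : P = Q := by
  have key : ∀ x y, P x < P y ↔ Q x < Q y := by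
    intro x y
    constructor
    · intro h
      rcases lt_trichotomy (Q x) (Q y) with h' | h' | h'
      · exact h'
      · rw [Q.injective h'] at h; exact absurd h (lt_irrefl _)
      · exact absurd (hP _ _ h) (lt_asymm (hQ _ _ h'))
    · intro h
      rcases lt_trichotomy (P x) (P y) with h' | h' | h'
      · exact h'
      · rw [P.injective h'] at h; exact absurd h (lt_irrefl _)
      · exact absurd (hQ _ _ h) (lt_asymm (hP _ _ h'))
  have hmono : StrictMono (P.symm.trans Q) := by
    intro i j hij
    have := (key (P.symm i) (P.symm j)).1 (by simpa using hij)
    simpa using this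
  have hid : ∀ i, (P.symm.trans Q) i = i := by
    let e : Fin m ≃o Fin m := StrictMono.orderIsoOfSurjective _ hmono (P.symm.trans Q).surjective
    have : e = OrderIso.refl _ := Subsingleton.elim _ _
    intro i
    have h2 : e i = i := by rw [this]; rfl
    exact h2
  ext x
  have := hid (P x)
  simp at this
  rw [this]

lemma SChain.consistent {PT PF : M ≃ Fin m} {cr : M → M → ℝ} {f : ℝ → M → ℝ}
    (hN : ∀ a b α, 0 ≤ α → α ≤ 1 → PT a < PT b → PF a < PF b → f α b < f α a)
    (hX1 : ∀ a b α, PT a < PT b → PF b < PF a → α < cr a b → f α b < f α a)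
    (hX2 : ∀ a b α, PT a < PT b → PF b < PF a → cr a b < α → f α a < f α b)
    (σ : M ≃ Fin m) (s : ℝ)
    (hJ1 : ∀ a b, σ a < σ b → PF b < PF a → PT a < PT b)
    (hJ2 : ∀ a b, σ a < σ b → PF a < PF b → PT b < PT a → cr b a ≤ s)
    (α : ℝ) (h0 : 0 ≤ α) (h1 : α ≤ 1) (hs : s < α)
    (hα : ∀ a b, σ a < σ b → PF b < PF a → α < cr a b) : Consistent (f α) σ := by
  intro a b hab
  have hne : a ≠ b := by rintro rfl; exact lt_irrefl _ hab
  rcases lt_or_gt_of_ne (fun h => hne (PF.injective h)) with hF | hF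
  · rcases lt_or_gt_of_ne (fun h => hne (PT.injective h)) with hT | hT
    · exact hN a b α h0 h1 hT hF
    · exact hX2 b a α hT hF ((hJ2 a b hab hF hT).trans_lt hs)
  · exact hX1 a b α (hJ1 a b hab hF) hF (hα a b hab hF)

lemma SChain.main {PT PF : M ≃ Fin m} {cr : M → M → ℝ} {f : ℝ → M → ℝ}
    (hN : ∀ a b α, 0 ≤ α → α ≤ 1 → PT a < PT b → PF a < PF b → f α b < f α a)
    (hX1 : ∀ a b α, PT a < PT b → PF b < PF a → α < cr a b → f α b < f α a)
    (hX2 : ∀ a b α, PT a < PT b → PF b < PF a → cr a b < α → f α a < f α b)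
    (hX3 : ∀ a b, PT a < PT b → PF b < PF a → f (cr a b) a = f (cr a b) b)
    (hC1 : ∀ a b, PT a < PT b → PF b < PF a → cr a b < 1)
    {σ s L} (h : SChain PF cr σ s L) (hs0 : 0 ≤ s) (hs1 : s < 1)
    (hJ1 : ∀ a b, σ a < σ b → PF b < PF a → PT a < PT b)
    (hJ2 : ∀ a b, σ a < σ b → PF a < PF b → PT b < PT a → cr b a ≤ s) :
    (∀ P ∈ σ :: L, ∃ α, s < α ∧ α ≤ 1 ∧ Consistent (f α) P) ∧
    (∀ P α, s < α → α ≤ 1 → Consistent (f α) P → P ∈ σ :: L) ∧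
    (σ :: L).Pairwise (fun P Q => ∀ α α', Consistent (f α) P → Consistent (f α') Q → α < α') := by
  induction h with
  | nil s =>
    have hc : ∀ α, s < α → α ≤ 1 → Consistent (f α) PF := fun α h h' =>
      SChain.consistent hN hX1 hX2 PF s hJ1 hJ2 α (hs0.trans h.le) h' h
        (fun a b h1 h2 => absurd h1 (lt_asymm h2))
    refine ⟨?_, ?_, by simp⟩
    · intro P hP
      simp at hP; subst hP
      exact ⟨1, hs1, le_rfl, hc 1 hs1 le_rfl⟩
    · intro P α h h' hP
      rw [consistent_unique hP (hc α h h')]; simp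
  | cons σ σ' s L a b h1 h2 ha hb ho hs hc ih =>
    have hab : σ a < σ b := by rw [Fin.lt_def]; omega
    have hab' : σ' b < σ' a := by rw [ha, hb]; exact hab
    have hT := hJ1 a b hab h2
    have hJ1' : ∀ x y, σ' x < σ' y → PF y < PF x → PT x < PT y := by
      intro x y hxy hyx
      refine hJ1 x y ?_ hyx
      by_contra hcon
      have hne : x ≠ y := by rintro rfl; exact lt_irrefl _ hxy
      have h3 : σ y < σ x := lt_of_le_of_ne (not_lt.1 hcon) (fun h => hne (σ.injective h).symm)
      exact lt_asymm hxy (swap_lt σ σ' a b h1 ha hb ho y x h3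
        (by rintro ⟨rfl, rfl⟩; exact lt_asymm h2 hyx))
    have hJ2' : ∀ x y, σ' x < σ' y → PF x < PF y → PT y < PT x → cr y x ≤ cr a b := by
      intro x y hxy hyx hyT
      by_cases hn : y = a ∧ x = b
      · rw [hn.1, hn.2]
      refine (hJ2 x y ?_ hyx hyT).trans hs.le
      by_contra hcon
      have hne : x ≠ y := by rintro rfl; exact lt_irrefl _ hxy
      have h3 : σ y < σ x := lt_of_le_of_ne (not_lt.1 hcon) (fun h => hne (σ.injective h).symm)
      exact lt_asymm hxy (swap_lt σ σ' a b h1 ha hb ho y x h3 hn)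
    obtain ⟨i1, i2, i3⟩ := ih (hs0.trans hs.le) (hC1 a b hT h2) hJ1' hJ2'
    have hcσ : ∀ α, s < α → α < cr a b → Consistent (f α) σ := by
      intro α hα hα'
      refine SChain.consistent hN hX1 hX2 σ s hJ1 hJ2 α (hs0.trans hα.le)
        (hα'.le.trans (hC1 a b hT h2).le) hα ?_
      intro x y hxy hyx
      by_cases hn : x = a ∧ y = b
      · rw [hn.1, hn.2]; exact hα'
      · exact hα'.trans (hc.cross_gt x y (swap_lt σ σ' a b h1 ha hb ho x y hxy hn) hyx)
    refine ⟨?_, ?_, ?_⟩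
    · intro P hP
      rcases List.mem_cons.1 hP with rfl | hP
      · refine ⟨(s + cr a b) / 2, by linarith, ?_, hcσ _ (by linarith) (by linarith)⟩
        have := hC1 a b hT h2
        linarith
      · obtain ⟨α, h3, h4, h5⟩ := i1 P hP
        exact ⟨α, hs.trans h3, h4, h5⟩
    · intro P α h3 h4 h5
      rcases lt_trichotomy α (cr a b) with h6 | h6 | h6
      · rw [consistent_unique h5 (hcσ α h3 h6)]; simp
      · exfalso
        have h7 := hX3 a b hT h2
        rw [← h6] at h7
        have hne : a ≠ b := by rintro rfl; exact lt_irrefl _ hab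
        rcases lt_or_gt_of_ne (fun h => hne (P.injective h)) with h8 | h8
        · have := h5 _ _ h8; linarith
        · have := h5 _ _ h8; linarith
      · exact List.mem_cons_of_mem _ (i2 P α h6 h4 h5)
    · refine List.Pairwise.cons ?_ i3
      intro Q hQ α α' hα hα'
      have hQab : Q b < Q a := by
        rcases List.mem_cons.1 hQ with rfl | hQ
        · exact hab'
        · exact hc.inv_sub Q hQ a b hab' h2
      have e1 : α < cr a b := by
        by_contra hcon
        have h9 := hα a b hab
        rcases (not_lt.1 hcon).lt_or_eq with h10 | h10
        · exact lt_asymm h9 (hX2 a b α hT h2 h10)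
        · have := hX3 a b hT h2
          rw [h10] at this; linarith
      have e2 : cr a b < α' := by
        by_contra hcon
        have h9 := hα' b a hQab
        rcases (not_lt.1 hcon).lt_or_eq with h10 | h10
        · exact lt_asymm h9 (hX1 a b α' hT h2 h10)
        · have := hX3 a b hT h2
          rw [← h10] at this; linarith
      exact e1.trans e2

/-- invariant at the start of phase `t` -/
def KInv (PT PF : M ≃ Fin m) (cr : M → M → ℝ) (σ : M ≃ Fin m) (t : ℕ) (s : ℝ) : Prop :=
  (∀ j, (PF j : ℕ) < t → σ j = PF j) ∧
  (∀ a b, t ≤ (PF a : ℕ) → t ≤ (PF b : ℕ) → PT a < PT b → σ a < σ b) ∧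
  (∀ a b, PT a < PT b → PF b < PF a → t ≤ (PF b : ℕ) → s < cr a b)

/-- invariant within phase `t` -/
def KInv' (PT PF : M ≃ Fin m) (cr : M → M → ℝ) (σ : M ≃ Fin m) (t : ℕ) (b : M) (s : ℝ) : Prop :=
  (∀ j, (PF j : ℕ) < t → σ j = PF j) ∧
  (∀ a c, t < (PF a : ℕ) → t < (PF c : ℕ) → PT a < PT c → σ a < σ c) ∧
  (∀ a, t < (PF a : ℕ) → σ a < σ b → PT a < PT b) ∧
  (∀ a, t < (PF a : ℕ) → σ a < σ b → s < cr a b) ∧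
  (∀ a c, PT a < PT c → PF c < PF a → t < (PF c : ℕ) → s < cr a c)

lemma moveUp_chain [DecidableEq M] {PT PF : M ≃ Fin m} {cr : M → M → ℝ}
    (H2 : ∀ a b a' b', PT a < PT b → PF b < PF a → PT a' < PT b' → PF b' < PF a' →
      (PF b < PF b' ∨ (b = b' ∧ PT a' < PT a)) → cr a b < cr a' b')
    (t : ℕ) (b : M) (hb : (PF b : ℕ) = t) (ts : List (Fin m))
    (hts : ∀ σ s, KInv PT PF cr σ (t + 1) s → SChain PF cr σ s (canonFrom PF σ ts)) :
    ∀ (k : ℕ) (σ : M ≃ Fin m) (s : ℝ), KInv' PT PF cr σ t b s → (σ b : ℕ) = t + k →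
      SChain PF cr σ s (moveUp b σ k ++ canonFrom PF ((moveUp b σ k).getLast?.getD σ) ts) := by
  intro k
  induction k with
  | zero =>
    rintro σ s ⟨k1, k2, k3, k4, k5⟩ hσ
    simp only [moveUp, List.nil_append, List.getLast?_nil, Option.getD_none]
    apply hts
    refine ⟨?_, ?_, ?_⟩
    · intro j hj
      by_cases h : (PF j : ℕ) < t
      · exact k1 j h
      · have : j = b := PF.injective (Fin.ext (by omega))
        subst this
        exact Fin.ext (by omega)
    · intro a c ha hc; exact k2 a c ha hc
    · intro a c h1 h2 h3; exact k5 a c h1 h2 h3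
  | succ k ih =>
    rintro σ s ⟨k1, k2, k3, k4, k5⟩ hσ
    simp only [moveUp, List.cons_append, List.getLast?_cons, Option.getD_some]
    set σ' := swapUp σ b with hσ'
    have hlt : (σ b : ℕ) - 1 < m := lt_of_le_of_lt (Nat.sub_le _ 1) (σ b).isLt
    obtain ⟨a, hadef⟩ : ∃ a, σ a = ⟨(σ b : ℕ) - 1, hlt⟩ := σ.surjective _
    have hav : (σ a : ℕ) = t + k := by rw [hadef]; simp; omega
    have h1 : (σ a : ℕ) + 1 = σ b := by omega
    have ea : σ' a = σ b := by simp [hσ', swapUp, ← hadef]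
    have eb : σ' b = σ a := by simp [hσ', swapUp, ← hadef]
    have eo : ∀ x, x ≠ a → x ≠ b → σ' x = σ x := by
      intro x xa xb
      simp only [hσ', swapUp, ← hadef, Equiv.trans_apply]
      exact Equiv.swap_apply_of_ne_of_ne (fun h => xb (σ.injective h)) (fun h => xa (σ.injective h))
    have hab : σ a < σ b := by rw [Fin.lt_def]; omega
    have hne : a ≠ b := by rintro rfl; exact lt_irrefl _ hab
    have hFa : t < (PF a : ℕ) := by
      by_contra hcon
      rcases (not_lt.1 hcon).lt_or_eq with h | h
      · have := k1 a h
        rw [← this] at h; omega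
      · exact hne (PF.injective (Fin.ext (by omega)))
    have hF : PF b < PF a := by rw [Fin.lt_def]; omega
    have hT := k3 a hFa hab
    have hσ'x : ∀ x, σ' x < σ' b → σ x < σ a ∧ x ≠ a ∧ x ≠ b := by
      intro x hx
      have xb : x ≠ b := by rintro rfl; exact lt_irrefl _ hx
      have xa : x ≠ a := by
        rintro rfl; rw [ea, eb] at hx; exact lt_asymm hx hab
      rw [eo x xa xb, eb] at hx
      exact ⟨hx, xa, xb⟩
    refine SChain.cons σ σ' s _ a b h1 hF ea eb eo (k4 a hFa hab) ?_
    refine ih σ' (cr a b) ⟨?_, ?_, ?_, ?_, ?_⟩ (by rw [eb]; exact hav)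
    · intro j hj
      rw [← k1 j hj]
      apply eo
      · rintro rfl; omega
      · rintro rfl; omega
    · intro x y hx hy hxy
      refine swap_lt σ σ' a b h1 ea eb eo x y (k2 x y hx hy hxy) ?_
      rintro ⟨rfl, rfl⟩; omega
    · intro x hx hxb
      exact k3 x hx ((hσ'x x hxb).1.trans hab)
    · intro x hx hxb
      obtain ⟨h3, h4, h5⟩ := hσ'x x hxb
      have hTx := k3 x hx (h3.trans hab)
      refine H2 a b x b hT hF hTx (by rw [Fin.lt_def]; omega) (Or.inr ⟨rfl, ?_⟩)
      rcases lt_trichotomy (PT x) (PT a) with h | h | h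
      · exact h
      · exact absurd (PT.injective h) h4
      · exact absurd (k2 a x hFa hx h) (lt_asymm h3)
    · intro x c hxc hcx hc
      exact H2 a b x c hT hF hxc hcx (Or.inl (by rw [Fin.lt_def]; omega))

lemma canonFrom_chain [DecidableEq M] {PT PF : M ≃ Fin m} {cr : M → M → ℝ}
    (H2 : ∀ a b a' b', PT a < PT b → PF b < PF a → PT a' < PT b' → PF b' < PF a' →
      (PF b < PF b' ∨ (b = b' ∧ PT a' < PT a)) → cr a b < cr a' b') :
    ∀ (ts : List (Fin m)) (t n : ℕ), t + n = m → ts.map Fin.val = List.range' t n →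
      ∀ σ s, KInv PT PF cr σ t s → SChain PF cr σ s (canonFrom PF σ ts) := by
  intro ts
  induction ts with
  | nil =>
    intro t n htn hl σ s hK
    have hn : n = 0 := by
      have := congrArg List.length hl
      simpa using this.symm
    have : σ = PF := by
      ext j
      rw [hK.1 j (by have := (PF j).isLt; omega)]
    subst this
    exact SChain.nil s
  | cons t0 ts ih =>
    intro t n htn hl σ s hK
    obtain ⟨n, rfl⟩ : ∃ n', n = n' + 1 := by
      have := congrArg List.length hl
      simp at this
      exact ⟨_, this.symm⟩
    rw [List.range'_succ, List.map_cons, List.cons.injEq] at hl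
    obtain ⟨h0, hl⟩ := hl
    obtain ⟨k1, k2, k3⟩ := hK
    have hb : (PF (PF.symm t0) : ℕ) = t := by simp [h0]
    set b := PF.symm t0 with hbdef
    have hσb : t ≤ (σ b : ℕ) := by
      by_contra hcon
      have hlt : (σ b : ℕ) < t := not_le.1 hcon
      have e := k1 (PF.symm (σ b)) (by simpa using hlt)
      rw [Equiv.apply_symm_apply] at e
      have e2 := congrArg PF (σ.injective e)
      rw [Equiv.apply_symm_apply] at e2
      rw [e2] at hlt
      omega
    have hord : ∀ a, t < (PF a : ℕ) → σ a < σ b → PT a < PT b := by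
      intro a ha hab
      rcases lt_trichotomy (PT a) (PT b) with h | h | h
      · exact h
      · rw [PT.injective h] at hab; exact absurd hab (lt_irrefl _)
      · exact absurd (k2 b a hb.ge ha.le h) (lt_asymm hab)
    refine moveUp_chain H2 t b hb ts (ih (t + 1) n (by omega) hl) _ σ s ⟨k1, ?_, hord, ?_, ?_⟩ ?_
    · intro a c ha hc; exact k2 a c ha.le hc.le
    · intro a ha hab
      exact k3 a b (hord a ha hab) (by rw [Fin.lt_def]; omega) hb.ge
    · intro a c h1 h2 h3; exact k3 a c h1 h2 h3.le
    · rw [← hbdef]; omega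

end Helpers

lemma cross_lt {x y x' y' : ℝ} (hx : 0 < x) (hy : 0 < y) (hx' : 0 < x') (hy' : 0 < y')
    (h : x * y' < x' * y) : x / (x + y) < x' / (x' + y') := by
  rw [div_lt_div_iff₀ (by positivity) (by positivity)]
  nlinarith

/-- **Claim 2.** Let `u` be consistent with `P^T` and, for `C > 1`, let
`v(j) = C^(m - rank_{P^F}(j))`. For all sufficiently large `C`, the sequence of
preference orders passed by the segment `co(u,v)`, in increasing order of `α`,
is exactly the canonical (bubble-sort) transition from `P^T` to `P^F`. -/
theorem segment_induces_canonical_transition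
    {M : Type*} [Fintype M] [DecidableEq M] {m : ℕ} (hm : Fintype.card M = m)
    (PT PF : M ≃ Fin m) (u : M → ℝ) (hu0 : ∀ j, 0 ≤ u j) (huc : Consistent u PT) :
    ∃ C₀ : ℝ, 1 < C₀ ∧ ∀ C : ℝ, C₀ ≤ C →
      CanonicalPassing u (fun j => C ^ (m - 1 - (PF j : ℕ))) PT PF := by
  classical
  obtain ⟨K, hK⟩ := (Set.finite_range (fun p : M × M × M × M =>
    (u p.1 - u p.2.1) / (u p.2.2.1 - u p.2.2.2))).bddAbove
  have hK' : ∀ a b c d, (u a - u b) / (u c - u d) ≤ K := fun a b c d => hK ⟨(a, b, c, d), rfl⟩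
  refine ⟨|K| + 2, by have := abs_nonneg K; linarith, ?_⟩
  intro C hC
  have hCK : K < C - 1 := by have := le_abs_self K; linarith
  have hC1 : 1 < C := by have := abs_nonneg K; linarith
  have hCp : 0 < C := by linarith
  set v : M → ℝ := fun j => C ^ (m - 1 - (PF j : ℕ)) with hv
  have hvpos : ∀ j, 0 < v j := fun j => pow_pos hCp _
  have hvC : ∀ a b, PF a < PF b → C * v b ≤ v a := by
    intro a b hab
    rw [Fin.lt_def] at hab
    have := (PF b).isLt
    simp only [hv]
    rw [← pow_succ']
    exact pow_le_pow_right₀ hC1.le (by omega)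
  have hvlt : ∀ a b, PF a < PF b → v b < v a := by
    intro a b hab
    have := hvC a b hab
    nlinarith [hvpos b]
  set cr : M → M → ℝ := fun a b => (u a - u b) / ((u a - u b) + (v b - v a)) with hcr
  have hX0 : ∀ a b, PT a < PT b → 0 < u a - u b := fun a b h => sub_pos.2 (huc a b h)
  have hY0 : ∀ a b, PF b < PF a → 0 < v b - v a := fun a b h => sub_pos.2 (hvlt b a h)
  have H2 : ∀ a b a' b', PT a < PT b → PF b < PF a → PT a' < PT b' → PF b' < PF a' →
      (PF b < PF b' ∨ (b = b' ∧ PT a' < PT a)) → cr a b < cr a' b' := by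
    intro a b a' b' h1 h2 h3 h4 h5
    have x0 := hX0 a b h1
    have x0' := hX0 a' b' h3
    have y0 := hY0 a b h2
    have y0' := hY0 a' b' h4
    refine cross_lt x0 y0 x0' y0' ?_
    have hva := hvC b a h2
    have hpa' := hvpos a'
    have hpb := hvpos b
    have hpb' := hvpos b'
    rcases h5 with h5 | ⟨rfl, h5⟩
    · have hr := (div_le_iff₀ x0').1 (hK' a b a' b')
      have hxx : u a - u b < (u a' - u b') * (C - 1) := by nlinarith
      have hvb := hvC b b' h5
      have hy : (C - 1) * v b' ≤ v b - v a := by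
        -- C v b' ≤ v b, C v a ≤ v b
        have : (C - 1) * v b ≤ C * (v b - v a) := by nlinarith
        have h6 : C * ((C - 1) * v b') ≤ C * (v b - v a) := by nlinarith
        exact le_of_mul_le_mul_left h6 hCp
      calc (u a - u b) * (v b' - v a') < ((u a' - u b') * (C - 1)) * (v b' - v a') := by
            exact mul_lt_mul_of_pos_right hxx y0'
        _ ≤ ((u a' - u b') * (C - 1)) * v b' := by
            refine mul_le_mul_of_nonneg_left (by linarith) (mul_nonneg x0'.le (by linarith))
        _ = (u a' - u b') * ((C - 1) * v b') := by ring
        _ ≤ _ := mul_le_mul_of_nonneg_left hy x0'.le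
    · have z0 := hX0 a' a h5
      have hr := (div_le_iff₀ z0).1 (hK' a' b a' a)
      have hxx : (u a - u b) * C < (u a' - u b) * (C - 1) := by nlinarith
      have h7 : C * ((u a - u b) * (v b - v a')) < C * ((u a' - u b) * (v b - v a)) := by
        calc C * ((u a - u b) * (v b - v a')) ≤ C * ((u a - u b) * v b) := by
              refine mul_le_mul_of_nonneg_left (mul_le_mul_of_nonneg_left (by linarith) x0.le) hCp.le
          _ = ((u a - u b) * C) * v b := by ring
          _ < ((u a' - u b) * (C - 1)) * v b := mul_lt_mul_of_pos_right hxx hpb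
          _ = (u a' - u b) * ((C - 1) * v b) := by ring
          _ ≤ (u a' - u b) * (C * (v b - v a)) := mul_le_mul_of_nonneg_left (by linarith) x0'.le
          _ = _ := by ring
      exact lt_of_mul_lt_mul_left h7 hCp.le
  have hd0 : ∀ a b, PT a < PT b → PF b < PF a → 0 < (u a - u b) + (v b - v a) :=
    fun a b h1 h2 => add_pos (hX0 a b h1) (hY0 a b h2)
  have hcr0 : ∀ a b, PT a < PT b → PF b < PF a → 0 < cr a b :=
    fun a b h1 h2 => div_pos (hX0 a b h1) (hd0 a b h1 h2)
  have hcr1 : ∀ a b, PT a < PT b → PF b < PF a → cr a b < 1 := by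
    intro a b h1 h2
    rw [hcr]; simp only
    rw [div_lt_one (hd0 a b h1 h2)]
    have := hY0 a b h2
    linarith
  have hN : ∀ a b α, 0 ≤ α → α ≤ 1 → PT a < PT b → PF a < PF b →
      mix u v α b < mix u v α a := by
    intro a b α h0 h1 hT hF
    have e1 := hX0 a b hT
    have e2 := hY0 b a hF
    simp only [mix]
    rcases h0.lt_or_eq with h | h
    · nlinarith [mul_pos h e2, mul_nonneg (sub_nonneg.2 h1) e1.le]
    · subst h; linarith
  have hX1 : ∀ a b α, PT a < PT b → PF b < PF a → α < cr a b →
      mix u v α b < mix u v α a := by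
    intro a b α h1 h2 h
    have := (lt_div_iff₀ (hd0 a b h1 h2)).1 h
    simp only [mix]; linarith
  have hX2 : ∀ a b α, PT a < PT b → PF b < PF a → cr a b < α →
      mix u v α a < mix u v α b := by
    intro a b α h1 h2 h
    have := (div_lt_iff₀ (hd0 a b h1 h2)).1 h
    simp only [mix]; linarith
  have hX3 : ∀ a b, PT a < PT b → PF b < PF a →
      mix u v (cr a b) a = mix u v (cr a b) b := by
    intro a b h1 h2
    have : cr a b * ((u a - u b) + (v b - v a)) = u a - u b :=
      div_mul_cancel₀ _ (hd0 a b h1 h2).ne'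
    simp only [mix]; linarith
  have hch : SChain PF cr PT 0 (canonFrom PF PT (List.finRange m)) := by
    refine canonFrom_chain H2 (List.finRange m) 0 m (by omega) ?_ PT 0 ⟨?_, ?_, ?_⟩
    · rw [← List.range_eq_range']; exact List.map_coe_finRange_eq_range
    · intro j hj; omega
    · intro a b _ _ h; exact h
    · intro a b h1 h2 _; exact hcr0 a b h1 h2
  obtain ⟨r1, r2, r3⟩ := SChain.main hN hX1 hX2 hX3 hcr1 hch le_rfl one_pos
    (fun a b h _ => h) (fun a b h1 _ h2 => absurd h1 (lt_asymm h2))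
  refine ⟨?_, ?_⟩
  · intro P
    constructor
    · rintro ⟨α, ⟨h0, h1⟩, hP⟩
      rcases h0.lt_or_eq with h | h
      · exact r2 P α h h1 hP
      · subst h
        have : mix u v 0 = u := by funext j; simp [mix]
        rw [this] at hP
        rw [consistent_unique hP huc]
        simp [canonicalTransition]
    · intro hP
      obtain ⟨α, h0, h1, h2⟩ := r1 P hP
      exact ⟨α, ⟨h0.le, h1⟩, h2⟩
  · intro k l hk hl hkl α α' _ _ h1 h2
    exact (List.pairwise_iff_get.1 r3) ⟨k, hk⟩ ⟨l, hl⟩ hkl α α' h1 h2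
end

section
/- Let M be a finite set of objects, r ∈ [0,1], and u, v : M → ℝ≥0 utility functions both satisfying URBI(r). Let a,b ∈ M be objects with u(a) > u(b) and v(a) > v(b). Then for every α ∈ [0,1], writing u_α = (1−α)u + αv, we have u_α(b) − min_{j∈M} u_α(j) ≤ r·(u_α(a) − min_{j∈M} u_α(j)). -/
open Finset

/-- **Claim 4 (URBI(r) is preserved along the segment for unswapped pairs).**
If `u` and `v` both satisfy `URBI(r)` and both rank `a` above `b` (i.e. `u(a) > u(b)`
and `v(a) > v(b)`), then for every `α ∈ [0,1]` the convex combination `u_α` satisfies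
the `URBI(r)` constraint for `a` over `b`. -/
theorem urbi_along_segment_no_swap
    {M : Type*} [Fintype M] [Nonempty M]
    (r : ℝ) (hr : r ∈ Set.Icc (0 : ℝ) 1)
    (u v : M → ℝ) (hu0 : ∀ j, 0 ≤ u j) (hv0 : ∀ j, 0 ≤ v j)
    (huU : URBI u r) (hvU : URBI v r)
    (a b : M) (hu : u b < u a) (hv : v b < v a) :
    ∀ α ∈ Set.Icc (0 : ℝ) 1,
      mix u v α b - minU (mix u v α) ≤ r * (mix u v α a - minU (mix u v α)) := by
  intro α hα
  obtain ⟨hr0, hr1⟩ := hr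
  obtain ⟨h0, h1⟩ := hα
  have hmin : (1 - α) * minU u + α * minU v ≤ minU (mix u v α) := by
    refine Finset.le_inf' _ _ fun j hj => ?_
    have e1 : minU u ≤ u j := Finset.inf'_le _ hj
    have e2 : minU v ≤ v j := Finset.inf'_le _ hj
    exact add_le_add (mul_le_mul_of_nonneg_left e1 (by linarith))
      (mul_le_mul_of_nonneg_left e2 h0)
  have h3 := mul_le_mul_of_nonneg_left hmin (sub_nonneg.2 hr1)
  have h4 := mul_le_mul_of_nonneg_left (huU a b hu) (sub_nonneg.2 h1)
  have h5 := mul_le_mul_of_nonneg_left (hvU a b hv) h0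
  have ea : mix u v α a = (1 - α) * u a + α * v a := rfl
  have eb : mix u v α b = (1 - α) * u b + α * v b := rfl
  rw [ea, eb]
  linarith
end

section
/- Let M be a finite set of m objects, P^T and P^F preference orders on M, u a utility function consistent with P^T and v a utility function consistent with P^F, such that the line segment co(u,v) makes no simultaneous transitions (there is no α ∈ [0,1] and three pairwise distinct objects with equal value under u_α) and for every pair of objects swapped between P^T and P^F the indifference parameter of u_α is distinct. For objects a,b with u(a) > u(b) and v(a) < v(b), let α(a,b,1) denote the unique α ∈ (0,1) with u_α(a) = u_α(b). Then the following are equivalent: (1) the sequence of preference orders that co(u,v) passes, in increasing order of α, is the canonical (bubble-sort) transition from P^T to P^F; (2) for all objects a,b,c,d with P^T ranking a above b and c above d, and P^F ranking b above a and d above c: (i) if P^F ranks b above d, then α(a,b,1) < α(c,d,1), and (ii) if b = d and P^T ranks c above a, then α(a,b,1) < α(c,d,1). -/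
open Finset

/-- The transition time `α(a,b,1)`: the unique parameter at which
`u_α(a) = u_α(b)` (for `u(a) > u(b)`, `v(a) < v(b)`). -/
noncomputable def transTime {M : Type*} (u v : M → ℝ) (a b : M) : ℝ :=
  (u a - u b) / (u a - u b + v b - v a)

section Helpers

def Iv {M : Type*} {m : ℕ} (PT P : M ≃ Fin m) (x y : M) : Prop := PT x < PT y ∧ P y < P x

def LexLt {M : Type*} {m : ℕ} (PT PF : M ≃ Fin m) (a b c d : M) : Prop :=
  PF b < PF d ∨ (b = d ∧ PT c < PT a)

def GoodO {M : Type*} {m : ℕ} (PT PF P : M ≃ Fin m) : Prop :=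
  (∀ x y, Iv PT P x y → Iv PT PF x y) ∧
  (∀ a b c d, Iv PT PF a b → Iv PT PF c d → LexLt PT PF a b c d → Iv PT P c d → Iv PT P a b)

def StepO {M : Type*} {m : ℕ} (PT PF P P' : M ≃ Fin m) : Prop :=
  ∃ a b, Iv PT PF a b ∧ ¬ Iv PT P a b ∧ ∀ x y, Iv PT P' x y ↔ (Iv PT P x y ∨ (x = a ∧ y = b))

inductive Run {M : Type*} {m : ℕ} (PT PF : M ≃ Fin m) :
    (M ≃ Fin m) → List (M ≃ Fin m) → (M ≃ Fin m) → Prop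
  | nil (σ : M ≃ Fin m) : Run PT PF σ [] σ
  | cons (σ σ' τ : M ≃ Fin m) (L : List (M ≃ Fin m)) :
      StepO PT PF σ σ' → GoodO PT PF σ' → Run PT PF σ' L τ → Run PT PF σ (σ' :: L) τ

variable {M : Type*} {m : ℕ} {PT PF : M ≃ Fin m}

theorem Run.append {σ τ ρ : M ≃ Fin m} {L L' : List (M ≃ Fin m)}
    (h : Run PT PF σ L τ) (h' : Run PT PF τ L' ρ) : Run PT PF σ (L ++ L') ρ := by
  induction h with
  | nil => simpa using h'
  | cons σ σ' τ L h1 h2 h3 ih => exact Run.cons _ _ _ _ h1 h2 (ih h')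

theorem Run.last {σ τ : M ≃ Fin m} {L : List (M ≃ Fin m)}
    (h : Run PT PF σ L τ) : L.getLast?.getD σ = τ := by
  induction h with
  | nil => rfl
  | cons σ σ' τ L h1 h2 h3 ih =>
    rw [List.getLast?_cons]
    simpa using ih

theorem Run.good {σ τ : M ≃ Fin m} {L : List (M ≃ Fin m)}
    (h : Run PT PF σ L τ) : ∀ P ∈ L, GoodO PT PF P := by
  induction h with
  | nil => simp
  | cons σ σ' τ L h1 h2 h3 ih =>
    intro P hP
    rcases List.mem_cons.1 hP with rfl | hP
    · exact h2
    · exact ih P hP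

theorem Run.cross {σ τ : M ≃ Fin m} {L : List (M ≃ Fin m)}
    (h : Run PT PF σ L τ) (φ : (M ≃ Fin m) → Prop) (h0 : ¬ φ σ) (h1 : φ τ) :
    ∃ P ∈ σ :: L, ∃ P', StepO PT PF P P' ∧ GoodO PT PF P' ∧ ¬ φ P ∧ φ P' := by
  induction h with
  | nil => exact absurd h1 h0
  | cons σ σ' τ L hs hg h3 ih =>
    by_cases hφ : φ σ'
    · exact ⟨σ, by simp, σ', hs, hg, h0, hφ⟩
    · obtain ⟨P, hP, r⟩ := ih hφ h1
      exact ⟨P, List.mem_cons_of_mem _ hP, r⟩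

def StrictO (PT PF P P' : M ≃ Fin m) : Prop :=
  (∀ x y, Iv PT P x y → Iv PT P' x y) ∧ ∃ x y, Iv PT PF x y ∧ Iv PT P' x y ∧ ¬ Iv PT P x y

theorem Run.pairwise {σ τ : M ≃ Fin m} {L : List (M ≃ Fin m)}
    (h : Run PT PF σ L τ) : (σ :: L).Pairwise (StrictO PT PF) := by
  induction h with
  | nil => simp
  | cons σ σ' τ L hs hg h3 ih =>
    refine List.pairwise_cons.2 ⟨?_, ih⟩
    obtain ⟨a, b, hab, hn, hiff⟩ := hs
    have key : StrictO PT PF σ σ' :=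
      ⟨fun x y h => (hiff x y).2 (Or.inl h), a, b, hab, (hiff a b).2 (Or.inr ⟨rfl, rfl⟩), hn⟩
    intro P hP
    rcases List.mem_cons.1 hP with rfl | hP
    · exact key
    · have h2 := (List.pairwise_cons.1 ih).1 P hP
      obtain ⟨k1, x, y, k2, k3, k4⟩ := key
      exact ⟨fun x y h => h2.1 x y (k1 x y h), x, y, k2, h2.1 _ _ k3, k4⟩

/-- mid-phase invariant -/
def Mid (PT PF : M ≃ Fin m) (t : Fin m) (σ : M ≃ Fin m) : Prop :=
  (∀ x, PF x < t → σ x = PF x) ∧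
  (∀ x y, t < PF x → t < PF y → PT x < PT y → σ x < σ y) ∧
  (∀ x, t < PF x → PT (PF.symm t) < PT x → σ (PF.symm t) < σ x)

theorem placed {σ : M ≃ Fin m} {t : Fin m} (h : ∀ x, PF x < t → σ x = PF x) (y : M)
    (hy : σ y < t) : PF y = σ y := by
  have h1 := h (PF.symm (σ y)) (by simpa using hy)
  simp only [Equiv.apply_symm_apply] at h1
  have := σ.injective h1
  conv_lhs => rw [← this]
  simp

theorem lt_or_gt_of {P Q : M ≃ Fin m} {x y : M} (h : P x < P y) : Q x < Q y ∨ Q y < Q x := by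
  rcases lt_trichotomy (Q x) (Q y) with h1 | h1 | h1
  · exact Or.inl h1
  · rw [Q.injective h1] at h; exact absurd h (lt_irrefl _)
  · exact Or.inr h1

theorem Mid.good {σ : M ≃ Fin m} {t : Fin m} (h : Mid PT PF t σ) : GoodO PT PF σ := by
  obtain ⟨h1, h2, h3⟩ := h
  have hsub : ∀ x y, Iv PT σ x y → PF y ≤ t ∧ PF y < PF x := by
    rintro x y ⟨hp, hs⟩
    by_cases hx : PF x < t
    · have e := h1 x hx
      have : PF y = σ y := placed h1 y (by rw [e] at hs; exact hs.trans hx)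
      rw [this, ← e]
      refine ⟨?_, hs⟩
      rw [← e] at hx
      exact (hs.trans hx).le
    push Not at hx
    by_cases hy : PF y < t
    · exact ⟨hy.le, hy.trans_le hx⟩
    push Not at hy
    rcases hy.eq_or_lt with hy | hy
    · refine ⟨hy.ge, ?_⟩
      rcases lt_or_gt_of (Q := PF) hp with h | h
      · exact absurd hx (by rw [hy]; exact not_le.2 h)
      · exact h
    · exfalso
      rcases hx.eq_or_lt with hx | hx
      · have hb : PF.symm t = x := by rw [hx]; simp
        have := h3 y hy (by rw [hb]; exact hp)
        rw [hb] at this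
        exact lt_asymm this hs
      · exact lt_asymm (h2 x y hx hy hp) hs
  refine ⟨fun x y h => ⟨h.1, (hsub x y h).2⟩, ?_⟩
  intro a b c d hab hcd hlex hs
  have low : ∀ a b, Iv PT PF a b → PF b < t → Iv PT σ a b := by
    intro a b hab hb
    refine ⟨hab.1, ?_⟩
    have e := h1 b hb
    by_contra hc
    push Not at hc
    have h4 : σ a < t := by rw [e] at hc; exact hc.trans_lt hb
    have := placed h1 a h4
    rw [← this, e] at hc
    exact absurd hab.2 (not_lt.2 hc)
  have hd := (hsub c d hs).1
  rcases hlex with hlex | ⟨rfl, hca⟩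
  · exact low a b hab (hlex.trans_le hd)
  · rcases hd.eq_or_lt with hd | hd
    · refine ⟨hab.1, hs.2.trans (h2 c a ?_ ?_ hca)⟩
      · rw [← hd]; exact hcd.2
      · rw [← hd]; exact hab.2
    · exact low a b hab hd

theorem Mid.step [DecidableEq M] {σ : M ≃ Fin m} {t : Fin m} (h : Mid PT PF t σ)
    (hlt : t < σ (PF.symm t)) :
    Mid PT PF t (swapUp σ (PF.symm t)) ∧ StepO PT PF σ (swapUp σ (PF.symm t)) ∧
    ((swapUp σ (PF.symm t) (PF.symm t) : Fin m) : ℕ) = (σ (PF.symm t) : ℕ) - 1 := by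
  obtain ⟨h1, h2, h3⟩ := h
  set b := PF.symm t with hb
  have hPb : PF b = t := by simp [hb]
  obtain ⟨a, ha⟩ := σ.surjective
    ⟨(σ b : ℕ) - 1, lt_of_le_of_lt (Nat.sub_le _ 1) (σ b).isLt⟩
  have hav : (σ a : ℕ) = (σ b : ℕ) - 1 := by rw [ha]
  have hltv : (t : ℕ) < (σ b : ℕ) := hlt
  have hab : a ≠ b := by rintro rfl; omega
  have hsa : swapUp σ b a = σ b := by simp [swapUp, ← ha]
  have hsb : swapUp σ b b = σ a := by simp [swapUp, ← ha]
  have hso : ∀ x, x ≠ a → x ≠ b → swapUp σ b x = σ x := by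
    intro x hx hx'
    simp only [swapUp, ← ha, Equiv.trans_apply]
    exact Equiv.swap_apply_of_ne_of_ne (fun h => hx' (σ.injective h)) (fun h => hx (σ.injective h))
  have hva : ∀ x, x ≠ a → (σ x : ℕ) ≠ σ a := fun x hx h => hx (σ.injective (Fin.ext h))
  have hvb : ∀ x, x ≠ b → (σ x : ℕ) ≠ σ b := fun x hx h => hx (σ.injective (Fin.ext h))
  have hPa : t < PF a := by
    rcases lt_trichotomy (PF a) t with h | h | h
    · have := h1 a h
      have h' : (σ a : ℕ) < t := by rw [this]; exact h
      omega
    · exact absurd (by rw [hb, ← h]; simp) hab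
    · exact h
  have hsab : σ a < σ b := by rw [Fin.lt_def]; omega
  have hPT : PT a < PT b := by
    rcases lt_or_gt_of (Q := PT) hsab with h | h
    · exact h
    · exact absurd (h3 a hPa h) (lt_asymm hsab)
  -- comparison of all pairs other than a, b
  have hcmp : ∀ x y, ¬ (x = a ∧ y = b) → ¬ (x = b ∧ y = a) →
      (swapUp σ b x < swapUp σ b y ↔ σ x < σ y) := by
    intro x y hn hn'
    rw [Fin.lt_def, Fin.lt_def]
    by_cases hxa : x = a
    · by_cases hya : y = a
      · rw [hxa, hya]; simp
      · have hyb : y ≠ b := fun h => hn ⟨hxa, h⟩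
        rw [hso y hya hyb, hxa, hsa]
        have := hva y hya; have := hvb y hyb; omega
    · by_cases hxb : x = b
      · by_cases hyb : y = b
        · rw [hxb, hyb]; simp
        · have hya : y ≠ a := fun h => hn' ⟨hxb, h⟩
          rw [hso y hya hyb, hxb, hsb]
          have := hva y hya; have := hvb y hyb; omega
      · rw [hso x hxa hxb]
        have := hva x hxa; have := hvb x hxb
        by_cases hya : y = a
        · rw [hya, hsa]; omega
        · by_cases hyb : y = b
          · rw [hyb, hsb]; omega
          · rw [hso y hya hyb]
  refine ⟨⟨?_, ?_, ?_⟩, ⟨a, b, ⟨hPT, by rw [hPb]; exact hPa⟩, fun h => lt_asymm h.2 hsab, ?_⟩, ?_⟩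
  · intro x hx
    rw [hso x ?_ ?_, h1 x hx]
    · rintro rfl; exact lt_asymm hx hPa
    · rintro rfl; rw [hPb] at hx; exact lt_irrefl _ hx
  · intro x y hx hy hxy
    refine (hcmp x y ?_ ?_).2 (h2 x y hx hy hxy)
    · rintro ⟨-, rfl⟩; rw [hPb] at hy; exact lt_irrefl _ hy
    · rintro ⟨rfl, -⟩; rw [hPb] at hx; exact lt_irrefl _ hx
  · intro x hx hbx
    refine (hcmp b x ?_ ?_).2 (h3 x hx hbx)
    · rintro ⟨h, -⟩; exact hab h.symm
    · rintro ⟨-, rfl⟩; exact lt_asymm hbx hPT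
  · intro x y
    by_cases hxy : x = a ∧ y = b
    · obtain ⟨rfl, rfl⟩ := hxy
      simp only [Iv, hsa, hsb, and_self, or_true, iff_true]
      exact ⟨hPT, hsab⟩
    · simp only [hxy, or_false, Iv]
      refine and_congr_right fun h => hcmp y x ?_ ?_
      · rintro ⟨rfl, rfl⟩; exact lt_asymm h hPT
      · rintro ⟨h1, h2⟩; exact hxy ⟨h2, h1⟩
  · rw [hsb, hav]

theorem Mid.ge {σ : M ≃ Fin m} {t : Fin m} (h : Mid PT PF t σ) : t ≤ σ (PF.symm t) := by
  by_contra hc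
  push Not at hc
  have := placed h.1 _ hc
  rw [← this] at hc
  simp at hc

theorem Mid.run [DecidableEq M] {t : Fin m} (k : ℕ) : ∀ {σ : M ≃ Fin m}, Mid PT PF t σ →
    (σ (PF.symm t) : ℕ) - (t : ℕ) = k →
    ∃ τ, Run PT PF σ (moveUp (PF.symm t) σ k) τ ∧ Mid PT PF t τ ∧ τ (PF.symm t) = t := by
  induction k with
  | zero =>
    intro σ h hk
    have := Fin.le_def.1 h.ge
    exact ⟨σ, Run.nil _, h, Fin.ext (by omega)⟩
  | succ k ih =>
    intro σ h hk
    obtain ⟨h1, h2, h3⟩ := h.step (Fin.lt_def.2 (by omega))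
    obtain ⟨τ, r1, r2⟩ := ih h1 (by omega)
    exact ⟨τ, Run.cons _ _ _ _ h2 h1.good r1, r2⟩

/-- start-of-phase invariant -/
def StartO (PT PF : M ≃ Fin m) (t : ℕ) (σ : M ≃ Fin m) : Prop :=
  (∀ x, (PF x : ℕ) < t → σ x = PF x) ∧
  (∀ x y, t ≤ (PF x : ℕ) → t ≤ (PF y : ℕ) → PT x < PT y → σ x < σ y)

theorem StartO.mid {σ : M ≃ Fin m} {t : Fin m} (h : StartO PT PF t σ) : Mid PT PF t σ := by
  refine ⟨fun x hx => h.1 x hx, fun x y hx hy => h.2 x y (Fin.lt_def.1 hx).le (Fin.lt_def.1 hy).le,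
    fun x hx => h.2 _ x (by simp) (Fin.lt_def.1 hx).le⟩

theorem Mid.start {σ : M ≃ Fin m} {t : Fin m} (h : Mid PT PF t σ) (e : σ (PF.symm t) = t) :
    StartO PT PF (t + 1) σ := by
  refine ⟨fun x hx => ?_, fun x y hx hy => h.2.1 x y (Fin.lt_def.2 (by omega)) (Fin.lt_def.2 (by omega))⟩
  rcases (Nat.lt_succ_iff.1 hx).eq_or_lt with hx | hx
  · have : PF x = t := Fin.ext hx
    rw [← this] at e
    simpa using e
  · exact h.1 x hx

theorem canon_run [DecidableEq M] (n : ℕ) : ∀ (t : ℕ) (σ : M ≃ Fin m), t + n = m →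
    StartO PT PF t σ → Run PT PF σ (canonFrom PF σ ((List.finRange m).drop t)) PF := by
  induction n with
  | zero =>
    intro t σ ht h
    have : σ = PF := Equiv.ext fun x => h.1 x (by have := (PF x).isLt; omega)
    subst this
    rw [List.drop_eq_nil_of_le (by simp; omega)]
    exact Run.nil _
  | succ n ih =>
    intro t σ ht h
    have htm : t < m := by omega
    have h' : StartO PT PF ((⟨t, htm⟩ : Fin m) : ℕ) σ := h
    obtain ⟨τ, r1, r2, r3⟩ := Mid.run _ h'.mid rfl
    rw [List.drop_eq_getElem_cons (by simpa using htm)]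
    simp only [canonFrom, List.getElem_finRange, Fin.cast_mk]
    have e := r1.last
    simp only at e
    rw [e]
    exact r1.append (ih (t + 1) τ (by omega) (r2.start r3))

theorem canonical_run [DecidableEq M] (PT PF : M ≃ Fin m) :
    Run PT PF PT (canonFrom PF PT (List.finRange m)) PF := by
  have := canon_run (PT := PT) (PF := PF) m 0 PT (by omega) ⟨by simp, fun x y _ _ h => h⟩
  simpa using this

theorem goodO_self (PT PF : M ≃ Fin m) : GoodO PT PF PT :=
  ⟨fun _ _ h => absurd h.2 (lt_asymm h.1), fun _ _ _ _ _ _ _ h => absurd h.2 (lt_asymm h.1)⟩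

theorem iv_ext {P Q : M ≃ Fin m} (h : ∀ x y, Iv PT P x y ↔ Iv PT Q x y) : P = Q := by
  have key : ∀ x y, P x < P y → Q x < Q y := by
    intro x y hxy
    rcases lt_or_gt_of (Q := PT) hxy with hp | hp
    · rcases lt_or_gt_of (Q := Q) hxy with hq | hq
      · exact hq
      · exact absurd ((h x y).2 ⟨hp, hq⟩).2 (lt_asymm hxy)
    · exact ((h y x).1 ⟨hp, hxy⟩).2
  have hm : StrictMono (P.symm.trans Q) := by
    intro i j hij
    exact key _ _ (by simpa using hij)
  have := Subsingleton.elim (StrictMono.orderIsoOfSurjective _ hm (Equiv.surjective _))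
    (OrderIso.refl (Fin m))
  ext x
  have h2 := congrArg (fun f : Fin m ≃o Fin m => f (P x)) this
  simp at h2
  rw [h2]

theorem transTime_lt {u v : M → ℝ} {a b : M} (hu : u b < u a) (hv : v a < v b) (α : ℝ) :
    (transTime u v a b < α ↔ mix u v α a < mix u v α b) ∧
    (α < transTime u v a b ↔ mix u v α b < mix u v α a) := by
  have hp : 0 < u a - u b + v b - v a := by linarith
  unfold transTime mix
  rw [div_lt_iff₀ hp, lt_div_iff₀ hp]
  constructor <;> constructor <;> intro h <;> nlinarith

theorem mix_lt {u v : M → ℝ} {a b : M} (hu : u b < u a) (hv : v b < v a) {α : ℝ}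
    (h : α ∈ Set.Icc (0 : ℝ) 1) : mix u v α b < mix u v α a := by
  obtain ⟨h0, h1⟩ := h
  unfold mix
  rcases h0.eq_or_lt with rfl | h0
  · linarith
  · nlinarith [mul_nonneg (sub_nonneg.2 h1) (sub_pos.2 hu).le, mul_pos h0 (sub_pos.2 hv)]

theorem iv_iff {u v : M → ℝ} (huc : Consistent u PT) (hvc : Consistent v PF) {P : M ≃ Fin m}
    {α : ℝ} (hP : Consistent (mix u v α) P) {a b : M} (h : Iv PT PF a b) :
    (Iv PT P a b ↔ transTime u v a b < α) ∧ (¬ Iv PT P a b ↔ α < transTime u v a b) := by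
  obtain ⟨k1, k2⟩ := transTime_lt (huc a b h.1) (hvc b a h.2) α
  rw [k1, k2]
  by_cases hi : Iv PT P a b
  · have := hP _ _ hi.2
    exact ⟨⟨fun _ => this, fun _ => hi⟩, fun h => absurd hi h, fun h => absurd this (lt_asymm h)⟩
  · have : P a < P b := by
      rcases lt_or_gt_of (Q := P) h.1 with h' | h'
      · exact h'
      · exact absurd ⟨h.1, h'⟩ hi
    have := hP _ _ this
    exact ⟨⟨fun h => absurd h hi, fun h => absurd this (lt_asymm h)⟩, fun _ => this, fun _ => hi⟩

theorem iv_sub {u v : M → ℝ} (huc : Consistent u PT) (hvc : Consistent v PF) {P : M ≃ Fin m}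
    {α : ℝ} (hα : α ∈ Set.Icc (0 : ℝ) 1) (hP : Consistent (mix u v α) P) {a b : M}
    (h : Iv PT P a b) : Iv PT PF a b := by
  refine ⟨h.1, ?_⟩
  rcases lt_or_gt_of (Q := PF) h.1 with h' | h'
  · exact absurd (mix_lt (huc _ _ h.1) (hvc _ _ h') hα) (lt_asymm (hP _ _ h.2))
  · exact h'

theorem exists_alpha [Fintype M] {u v : M → ℝ} (huc : Consistent u PT) (hvc : Consistent v PF)
    {P : M ≃ Fin m} (hg : GoodO PT PF P)
    (H : ∀ a b c d, Iv PT PF a b → Iv PT PF c d → LexLt PT PF a b c d →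
      transTime u v a b < transTime u v c d) :
    ∃ α ∈ Set.Icc (0 : ℝ) 1, Consistent (mix u v α) P := by
  classical
  have h01 : ∀ a b, Iv PT PF a b → 0 < transTime u v a b ∧ transTime u v a b < 1 := by
    intro a b h
    have h1 := huc _ _ h.1
    have h2 := hvc _ _ h.2
    refine ⟨(transTime_lt h1 h2 0).2.2 (by simpa [mix] using h1),
      (transTime_lt h1 h2 1).1.2 (by simpa [mix] using h2)⟩
  let f : M × M → ℝ := fun p => transTime u v p.1 p.2
  obtain ⟨α, hlo, hhi⟩ := Order.exists_between_finsets
    (insert 0 ((Finset.univ.filter fun p : M × M => Iv PT P p.1 p.2).image f))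
    (insert 1 ((Finset.univ.filter fun p : M × M =>
      Iv PT PF p.1 p.2 ∧ ¬ Iv PT P p.1 p.2).image f)) (by
      intro x hx y hy
      simp only [Finset.mem_insert, Finset.mem_image, Finset.mem_filter, Finset.mem_univ,
        true_and, Prod.exists, f] at hx hy
      rcases hx with rfl | ⟨a, b, hab, rfl⟩
      · rcases hy with rfl | ⟨c, d, hcd, rfl⟩
        · exact one_pos
        · exact (h01 _ _ hcd.1).1
      · have hab' := hg.1 _ _ hab
        rcases hy with rfl | ⟨c, d, ⟨hcd, hn⟩, rfl⟩
        · exact (h01 _ _ hab').2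
        · refine H _ _ _ _ hab' hcd ?_
          by_contra hl
          unfold LexLt at hl
          push Not at hl
          obtain ⟨l1, l2⟩ := hl
          rcases l1.lt_or_eq with l | l
          · exact hn (hg.2 _ _ _ _ hcd hab' (Or.inl l) hab)
          · have e := PF.injective l
            subst e
            rcases (l2 rfl).lt_or_eq with l | l
            · exact hn (hg.2 _ _ _ _ hcd hab' (Or.inr ⟨rfl, l⟩) hab)
            · rw [PT.injective l] at hab
              exact hn hab)
  have h0 : 0 < α := hlo _ (by simp)
  have h1 : α < 1 := hhi _ (by simp)
  refine ⟨α, ⟨h0.le, h1.le⟩, ?_⟩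
  intro a b hab
  rcases lt_or_gt_of (Q := PT) hab with hp | hp
  · rcases lt_or_gt_of (Q := PF) hab with hq | hq
    · exact mix_lt (huc _ _ hp) (hvc _ _ hq) ⟨h0.le, h1.le⟩
    · refine (transTime_lt (huc _ _ hp) (hvc _ _ hq) α).2.1 (hhi _ ?_)
      refine Finset.mem_insert_of_mem (Finset.mem_image.2 ⟨(a, b), ?_, rfl⟩)
      simp only [Finset.mem_filter, Finset.mem_univ, true_and]
      exact ⟨⟨hp, hq⟩, fun h => lt_asymm h.2 hab⟩
  · have hi : Iv PT P b a := ⟨hp, hab⟩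
    refine (transTime_lt (huc _ _ hp) (hvc _ _ (hg.1 _ _ hi).2) α).1.1 (hlo _ ?_)
    refine Finset.mem_insert_of_mem (Finset.mem_image.2 ⟨(b, a), ?_, rfl⟩)
    simpa using hi

end Helpers

/-- **Claim 5 (Characterization of the canonical transition via transition times).**
Suppose `u` is consistent with `P^T`, `v` is consistent with `P^F`, `co(u,v)` makes
no simultaneous transitions, and the indifference parameters of distinct swapped pairs
are distinct. Then `co(u,v)` passes exactly the canonical (bubble-sort) transition from
`P^T` to `P^F` (in increasing order of `α`) iff for all objects `a,b,c,d` with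
`P^T : a ≻ b`, `P^T : c ≻ d`, `P^F : b ≻ a`, `P^F : d ≻ c`:
(i) if `P^F : b ≻ d` then `α(a,b,1) < α(c,d,1)`, and
(ii) if `b = d` and `P^T : c ≻ a` then `α(a,b,1) < α(c,d,1)`. -/
theorem canonical_transition_iff_transition_times
    {M : Type*} [Fintype M] [DecidableEq M] {m : ℕ}
    (PT PF : M ≃ Fin m) (u v : M → ℝ)
    (hu0 : ∀ j, 0 ≤ u j) (hv0 : ∀ j, 0 ≤ v j)
    (huc : Consistent u PT) (hvc : Consistent v PF)
    (hnosim : ∀ α ∈ Set.Icc (0 : ℝ) 1, ∀ a b c : M, a ≠ b → a ≠ c → b ≠ c →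
      ¬(mix u v α a = mix u v α b ∧ mix u v α b = mix u v α c))
    (hdist : ∀ a b c d : M, u b < u a → v a < v b → u d < u c → v c < v d →
      (a, b) ≠ (c, d) → transTime u v a b ≠ transTime u v c d) :
    CanonicalPassing u v PT PF ↔
      (∀ a b c d : M, PT a < PT b → PT c < PT d → PF b < PF a → PF d < PF c →
        ((PF b < PF d → transTime u v a b < transTime u v c d) ∧
         (b = d → PT c < PT a → transTime u v a b < transTime u v c d))) := by
  have hrun := canonical_run PT PF
  have hgood : ∀ P ∈ canonicalTransition PT PF, GoodO PT PF P := by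
    intro P hP
    rcases List.mem_cons.1 hP with rfl | hP
    · exact goodO_self _ _
    · exact hrun.good P hP
  constructor
  · intro hc
    have H : ∀ a b c d, Iv PT PF a b → Iv PT PF c d → LexLt PT PF a b c d →
        transTime u v a b < transTime u v c d := by
      intro a b c d hab hcd hl
      obtain ⟨P, hP, P', ⟨x, y, hxy, hn, hiff⟩, hg, hnot, hyes⟩ :=
        hrun.cross (fun Q => Iv PT Q c d) (fun h => lt_asymm h.1 h.2) hcd
      obtain ⟨α, hα, hcons⟩ := (hc.1 P).2 hP
      have e : c = x ∧ d = y := by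
        rcases (hiff c d).1 hyes with h | h
        · exact absurd h hnot
        · exact h
      have hin : Iv PT P a b := by
        rcases (hiff a b).1 (hg.2 _ _ _ _ hab hcd hl hyes) with h | h
        · exact h
        · exfalso
          obtain ⟨rfl, rfl⟩ := e
          obtain ⟨rfl, rfl⟩ := h
          rcases hl with h | h
          · exact lt_irrefl _ h
          · exact lt_irrefl _ h.2
      exact ((iv_iff huc hvc hcons hab).1.1 hin).trans ((iv_iff huc hvc hcons hcd).2.1 hnot)
    intro a b c d h1 h2 h3 h4
    exact ⟨fun h => H a b c d ⟨h1, h3⟩ ⟨h2, h4⟩ (Or.inl h),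
      fun h h' => H a b c d ⟨h1, h3⟩ ⟨h2, h4⟩ (Or.inr ⟨h, h'⟩)⟩
  · intro H0
    have H : ∀ a b c d, Iv PT PF a b → Iv PT PF c d → LexLt PT PF a b c d →
        transTime u v a b < transTime u v c d := by
      rintro a b c d hab hcd (h | ⟨h, h'⟩)
      · exact (H0 a b c d hab.1 hcd.1 hab.2 hcd.2).1 h
      · exact (H0 a b c d hab.1 hcd.1 hab.2 hcd.2).2 h h'
    refine ⟨fun P => ⟨?_, fun hP => exists_alpha huc hvc (hgood P hP) H⟩, ?_⟩
    · rintro ⟨α, hα, hP⟩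
      by_cases hall : ∀ x y, Iv PT PF x y → Iv PT P x y
      · have : P = PF := iv_ext (PT := PT) fun x y => ⟨iv_sub huc hvc hα hP, hall x y⟩
        have hl := hrun.last
        rw [this]
        unfold canonicalTransition
        have h2 : (PT :: canonFrom PF PT (List.finRange m)).getLast? = some PF := by
          rw [List.getLast?_cons, hl]
        exact List.mem_of_getLast? h2
      · obtain ⟨Q, hQ, Q', ⟨a, b, hab, hn, hiff⟩, hg, hsub, hnsub⟩ :=
          hrun.cross (fun Q => ¬ ∀ x y, Iv PT Q x y → Iv PT P x y)
            (fun h => h fun x y h => absurd h.1 (lt_asymm h.2)) hall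
        rw [not_not] at hsub
        have hnP : ¬ Iv PT P a b := by
          intro h
          apply hnsub
          intro x y hxy
          rcases (hiff x y).1 hxy with h' | ⟨rfl, rfl⟩
          · exact hsub x y h'
          · exact h
        have : P = Q := by
          refine iv_ext (PT := PT) fun x y => ⟨fun h => ?_, hsub x y⟩
          have hxy := iv_sub huc hvc hα hP h
          have hlt := ((iv_iff huc hvc hP hxy).1.1 h).trans ((iv_iff huc hvc hP hab).2.1 hnP)
          have hab' : Iv PT Q' a b := (hiff a b).2 (Or.inr ⟨rfl, rfl⟩)
          have hl : LexLt PT PF x y a b := by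
            by_contra hl
            unfold LexLt at hl
            push Not at hl
            obtain ⟨l1, l2⟩ := hl
            rcases l1.lt_or_eq with l | l
            · exact lt_asymm hlt (H _ _ _ _ hab hxy (Or.inl l))
            · have e := PF.injective l
              subst e
              rcases (l2 rfl).lt_or_eq with l | l
              · exact lt_asymm hlt (H _ _ _ _ hab hxy (Or.inr ⟨rfl, l⟩))
              · rw [PT.injective l] at hlt
                exact lt_irrefl _ hlt
          rcases (hiff x y).1 (hg.2 _ _ _ _ hxy hab hl hab') with h' | ⟨rfl, rfl⟩
          · exact h'
          · exact absurd h hnP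
        rw [this]
        exact hQ
    · intro k l hk hl hkl α α' hα hα' hc hc'
      have hpw : (canonicalTransition PT PF).Pairwise (StrictO PT PF) := hrun.pairwise
      obtain ⟨-, x, y, h1, h2, h3⟩ := List.pairwise_iff_getElem.1 hpw k l hk hl hkl
      exact ((iv_iff huc hvc hc h1).2.1 h3).trans ((iv_iff huc hvc hc' h1).1.1 h2)
end

section
/- Let s > 1 and α ∈ ℝ, and define β = s·α, γ_c = (1−α)/((s−1)·(s·(s+1)−1)), and γ_d = s·(s+1)·(1−α)/(s·(s+1)−1). Then all six vectors (α,0,0,1−α), (0,β,0,1−β), (0,0,0,1), (0,0,γ_c,1−γ_c), (1−γ_c−γ_d,0,γ_c,γ_d), and (1−γ_c−γ_d,γ_d,γ_c,0) have all entries in [0,1] (equivalently, they are probability vectors over four objects) if and only if α ∈ [s/(s³−s+1), 1/s]; moreover s/(s³−s+1) < 1/s for all s > 1, so this interval is nonempty. -/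
/-- **Claim 6 (Feasibility of the tightness construction).**
Let `s > 1`, `β = s·α`, `γc = (1-α)/((s-1)(s(s+1)-1))`, and
`γd = s(s+1)(1-α)/(s(s+1)-1)`. The six assignment vectors of the constructed
mechanism all have entries in `[0,1]` iff `α ∈ [s/(s³-s+1), 1/s]`; moreover
`s/(s³-s+1) < 1/s`, so this interval is nonempty. -/
theorem feasibility_iff
    (s α β γc γd : ℝ) (hs : 1 < s)
    (hβ : β = s * α)
    (hγc : γc = (1 - α) / ((s - 1) * (s * (s + 1) - 1)))
    (hγd : γd = s * (s + 1) * (1 - α) / (s * (s + 1) - 1)) :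
    (((∀ i, ![α, 0, 0, 1 - α] i ∈ Set.Icc (0 : ℝ) 1) ∧
      (∀ i, ![0, β, 0, 1 - β] i ∈ Set.Icc (0 : ℝ) 1) ∧
      (∀ i, ![0, 0, 0, 1] i ∈ Set.Icc (0 : ℝ) 1) ∧
      (∀ i, ![0, 0, γc, 1 - γc] i ∈ Set.Icc (0 : ℝ) 1) ∧
      (∀ i, ![1 - γc - γd, 0, γc, γd] i ∈ Set.Icc (0 : ℝ) 1) ∧
      (∀ i, ![1 - γc - γd, γd, γc, 0] i ∈ Set.Icc (0 : ℝ) 1)) ↔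
      α ∈ Set.Icc (s / (s ^ 3 - s + 1)) (1 / s)) ∧
    s / (s ^ 3 - s + 1) < 1 / s := by
  have h1 : 0 < s - 1 := by linarith
  have h2 : 0 < s * (s + 1) - 1 := by nlinarith
  have hs0 : 0 < s := by linarith
  have h3 : 0 < (s - 1) * (s * (s + 1) - 1) := mul_pos h1 h2
  have hD : 0 < s ^ 3 - s + 1 := by nlinarith
  have hsum : γc + γd = (1 - α) * (s ^ 3 - s + 1) / ((s - 1) * (s * (s + 1) - 1)) := by
    rw [hγc, hγd, div_add_div _ _ h3.ne' h2.ne', div_eq_div_iff (mul_pos h3 h2).ne' h3.ne']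
    ring
  have hkey : γc + γd ≤ 1 ↔ s / (s ^ 3 - s + 1) ≤ α := by
    rw [hsum, div_le_one h3, div_le_iff₀ hD]
    constructor <;> intro h <;> nlinarith
  have hβ1 : β ≤ 1 ↔ α ≤ 1 / s := by
    rw [hβ, le_div_iff₀ hs0, mul_comm]
  refine ⟨?_, ?_⟩
  · simp only [Fin.forall_fin_succ, Set.mem_Icc]
    simp
    rw [← one_div, ← hkey, ← hβ1]
    constructor
    · intro h
      constructor <;> linarith [h.2.1.2.1, h.2.2.2.1.1]
    · rintro ⟨ha, hb⟩
      have hα0 : 0 ≤ α := le_trans (div_nonneg hs0.le hD.le) (hkey.1 ha)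
      have hα1 : α ≤ 1 := (hβ1.1 hb).trans (by rw [div_le_one hs0]; exact hs.le)
      have hβ0 : 0 ≤ β := by rw [hβ]; positivity
      have hc : 0 ≤ γc := by rw [hγc]; exact div_nonneg (by linarith) h3.le
      have hd : 0 ≤ γd := by
        rw [hγd]; exact div_nonneg (mul_nonneg (by positivity) (by linarith)) h2.le
      refine ⟨?_, ?_, ?_, ?_, ?_⟩ <;> (repeat' constructor) <;> linarith
  · rw [div_lt_div_iff₀ hD hs0]
    nlinarith [mul_pos (mul_pos h1 h1) (by linarith : 0 < s + 1)]
end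

section
/- Let M be a finite set of m objects, P a preference order on M, and r ∈ (0,1]. Then there exists C₀ > 1 such that for all C ≥ C₀, the utility function v(j) = C^{m − rank_P(j)} is consistent with P and satisfies URBI(r). -/
open Finset

/-- **The geometric utility function is consistent and satisfies URBI(r).**
For a preference order `P` on `m` objects and `r ∈ (0,1]`, there exists `C₀ > 1` such
that for all `C ≥ C₀`, the utility function `v(j) = C^(m - rank_P(j))` is consistent
with `P` and satisfies `URBI(r)`. (Here `rank_P(j) = (P j : ℕ) + 1`.) -/
theorem geometric_utility_urbi
    {M : Type*} [Fintype M] [DecidableEq M] [Nonempty M] {m : ℕ}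
    (hm : Fintype.card M = m) (P : M ≃ Fin m)
    (r : ℝ) (hr : r ∈ Set.Ioc (0 : ℝ) 1) :
    ∃ C₀ : ℝ, 1 < C₀ ∧ ∀ C : ℝ, C₀ ≤ C →
      Consistent (fun j => C ^ (m - 1 - (P j : ℕ))) P ∧
      URBI (fun j => C ^ (m - 1 - (P j : ℕ))) r := by
  obtain ⟨hr0, hr1⟩ := hr
  have hi : 0 < 1 / r := by positivity
  refine ⟨1 / r + 1, by linarith, fun C hC => ?_⟩
  have hC1 : 1 < C := by linarith
  have hrC : 1 ≤ r * C := by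
    have h1 : r * (1 / r) = 1 := by field_simp
    have h2 : r * (1 / r) ≤ r * C := mul_le_mul_of_nonneg_left (by linarith) hr0.le
    linarith
  refine ⟨?_, ?_⟩
  · intro a b hab
    have h1 : (P a : ℕ) < (P b : ℕ) := hab
    have h2 := (P b).isLt
    exact pow_lt_pow_right₀ hC1 (by omega)
  · intro a b hab
    have hlt : m - 1 - (P b : ℕ) < m - 1 - (P a : ℕ) := (pow_lt_pow_iff_right₀ hC1).1 hab
    have hmin : 0 ≤ minU (fun j => C ^ (m - 1 - (P j : ℕ))) := by
      unfold minU
      refine Finset.le_inf' _ _ fun j _ => ?_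
      positivity
    generalize minU (fun j => C ^ (m - 1 - (P j : ℕ))) = μ at *
    have h3 : C ^ (m - 1 - (P b : ℕ) + 1) ≤ C ^ (m - 1 - (P a : ℕ)) :=
      pow_le_pow_right₀ hC1.le hlt
    rw [pow_succ] at h3
    have hb : 0 ≤ C ^ (m - 1 - (P b : ℕ)) := by positivity
    have h4 := mul_le_mul_of_nonneg_left h3 hr0.le
    have h5 := mul_le_mul_of_nonneg_right hrC hb
    have h6 : 0 ≤ (1 - r) * μ := mul_nonneg (by linarith) hmin
    show C ^ (m - 1 - (P b : ℕ)) - μ ≤ r * (C ^ (m - 1 - (P a : ℕ)) - μ)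
    nlinarith
end

section
/- Let M be a finite set, r ∈ (0,1), and u, v : M → ℝ≥0 with min_{j∈M} u(j) = min_{j∈M} v(j) = 0, attained at a common object j₀ (i.e., u(j₀) = v(j₀) = 0). Let a,b ∈ M \ {j₀} with u(a) > u(b) > 0, v(b) > v(a) > 0, u(b) − min_j u(j) ≤ r·(u(a) − min_j u(j)), and v(a) − min_j v(j) ≤ r·(v(b) − min_j v(j)). Write u_α = (1−α)u + αv, let α(a,b,1) be the unique α ∈ (0,1) with u_α(a) = u_α(b), let \underline{α}(a,b,r) = inf{α ∈ [0,1] : (u_α(b) − min_{j∈M} u_α(j))/(u_α(a) − min_{j∈M} u_α(j)) > r}, and let \overline{α}(b,a,r) = sup{α ∈ [0,1] : (u_α(a) − min_{j∈M} u_α(j))/(u_α(b) − min_{j∈M} u_α(j)) > r}. Then \underline{α}(a,b,r) < α(a,b,1) < \overline{α}(b,a,r). -/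
open Finset

/-- `\underline{α}(a,b,r)`: the first time at which `u_α` violates the `URBI(r)`
constraint for `a ≻ b`. -/
noncomputable def firstViol {M : Type*} [Fintype M] [Nonempty M]
    (u v : M → ℝ) (r : ℝ) (a b : M) : ℝ :=
  sInf {α : ℝ | α ∈ Set.Icc (0 : ℝ) 1 ∧
    r < (mix u v α b - minU (mix u v α)) / (mix u v α a - minU (mix u v α))}

/-- `\overline{α}(b,a,r)`: the last time at which `u_α` violates the `URBI(r)`
constraint for `b ≻ a` (the ratio of `a`'s to `b`'s normalized utility exceeds `r`). -/
noncomputable def lastViol {M : Type*} [Fintype M] [Nonempty M]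
    (u v : M → ℝ) (r : ℝ) (a b : M) : ℝ :=
  sSup {α : ℝ | α ∈ Set.Icc (0 : ℝ) 1 ∧
    r < (mix u v α a - minU (mix u v α)) / (mix u v α b - minU (mix u v α))}

theorem minU_mix_zero {M : Type*} [Fintype M] [Nonempty M]
    (u v : M → ℝ) (hu0 : ∀ j, 0 ≤ u j) (hv0 : ∀ j, 0 ≤ v j)
    (j₀ : M) (hju : u j₀ = 0) (hjv : v j₀ = 0) (α : ℝ) (h0 : 0 < α) (h1 : α < 1) :
    minU (mix u v α) = 0 := by
  unfold minU
  apply le_antisymm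
  · have := Finset.inf'_le (mix u v α) (Finset.mem_univ j₀)
    exact this.trans (by simp [mix, hju, hjv])
  · apply Finset.le_inf'
    intro j _
    have h2 : 0 ≤ 1 - α := by linarith
    exact add_nonneg (mul_nonneg h2 (hu0 j)) (mul_nonneg h0.le (hv0 j))

/-- **Ordering of violation times around a transition.**
If `u` and `v` have minimum `0` attained at a common object `j₀`, `u(a) > u(b) > 0`,
`v(b) > v(a) > 0`, and the respective `URBI(r)`-type constraints hold for `u` (for
`a ≻ b`) and for `v` (for `b ≻ a`), then
`\underline{α}(a,b,r) < α(a,b,1) < \overline{α}(b,a,r)`. -/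
theorem viol_times_ordering
    {M : Type*} [Fintype M] [DecidableEq M] [Nonempty M]
    (r : ℝ) (hr : r ∈ Set.Ioo (0 : ℝ) 1)
    (u v : M → ℝ) (hu0 : ∀ j, 0 ≤ u j) (hv0 : ∀ j, 0 ≤ v j)
    (j₀ : M) (hju : u j₀ = 0) (hjv : v j₀ = 0)
    (humin : minU u = 0) (hvmin : minU v = 0)
    (a b : M) (ha : a ≠ j₀) (hb : b ≠ j₀)
    (hub : 0 < u b) (huab : u b < u a) (hva : 0 < v a) (hvab : v a < v b)
    (huU : u b - minU u ≤ r * (u a - minU u))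
    (hvU : v a - minU v ≤ r * (v b - minU v)) :
    firstViol u v r a b < transTime u v a b ∧
      transTime u v a b < lastViol u v r a b := by
  obtain ⟨hr0, hr1⟩ := hr
  have hD : 0 < u a - u b + v b - v a := by linarith
  have hmin := minU_mix_zero u v hu0 hv0 j₀ hju hjv
  unfold firstViol lastViol
  set t := transTime u v a b with ht
  have htD : t * (u a - u b + v b - v a) = u a - u b := by
    rw [ht, transTime]; field_simp
  have ht0 : 0 < t := by
    rw [ht, transTime]; apply div_pos <;> linarith
  have ht1 : t < 1 := by
    rw [ht, transTime, div_lt_one hD]; linarith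
  have hpos : ∀ α : ℝ, 0 < α → α < 1 → ∀ j, 0 < u j → 0 < v j → 0 < mix u v α j := by
    intro α h0 h1 j hj1 hj2
    have h2 : 0 < 1 - α := by linarith
    exact add_pos (mul_pos h2 hj1) (mul_pos h0 hj2)
  have hua : 0 < u a := by linarith
  have hvb : 0 < v b := by linarith
  have hta := hpos t ht0 ht1 a hua hva
  have heq : mix u v t a = mix u v t b := by
    simp only [mix]; linarith
  have hc : ∀ j, Continuous fun α => mix u v α j := by
    intro j; simp only [mix]; fun_prop
  have e1 : ∀ᶠ α in nhds t, r * mix u v α a < mix u v α b :=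
    ((continuous_const.mul (hc a)).continuousAt).eventually_lt (hc b).continuousAt
      (by show r * mix u v t a < mix u v t b; rw [← heq]; nlinarith)
  have e2 : ∀ᶠ α in nhds t, r * mix u v α b < mix u v α a :=
    ((continuous_const.mul (hc b)).continuousAt).eventually_lt (hc a).continuousAt
      (by show r * mix u v t b < mix u v t a; rw [← heq]; nlinarith)
  have e3 : ∀ᶠ α in nhds t, 0 < α ∧ α < 1 := Ioo_mem_nhds ht0 ht1
  constructor
  · obtain ⟨s, ⟨h1, h0, h01⟩, hs⟩ :=
      (((e1.and e3).filter_mono (nhdsWithin_le_nhds (s := Set.Iio t))).and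
        self_mem_nhdsWithin).exists
    refine lt_of_le_of_lt (csInf_le ⟨0, fun x hx => hx.1.1⟩ ⟨⟨h0.le, h01.le⟩, ?_⟩) hs
    rw [hmin s h0 h01, sub_zero, sub_zero, lt_div_iff₀ (hpos s h0 h01 a hua hva)]
    exact h1
  · obtain ⟨s, ⟨h1, h0, h01⟩, hs⟩ :=
      (((e2.and e3).filter_mono (nhdsWithin_le_nhds (s := Set.Ioi t))).and
        self_mem_nhdsWithin).exists
    refine lt_of_lt_of_le hs (le_csSup ⟨1, fun x hx => hx.1.2⟩ ⟨⟨h0.le, h01.le⟩, ?_⟩)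
    rw [hmin s h0 h01, sub_zero, sub_zero, lt_div_iff₀ (hpos s h0 h01 b hub hvb)]
    exact h1
end

section
/- For every ε ∈ (0,2) there exists s₀ > 1 such that for all s ≥ s₀ and all α ∈ [0,1), defining γ_c = (1−α)/((s−1)·(s·(s+1)−1)), γ_d = s·(s+1)·(1−α)/(s·(s+1)−1), and s̃ = s^{2−ε}, we have the identity s̃²·(α − 1 + γ_c + γ_d) − s̃·γ_d − γ_c = (1−α)·(−s^{5−ε} + s^{5−2ε} + s^{3−ε} − 1)/(s³ − 2s + 1), and this quantity is strictly negative. Consequently, the constructed mechanism from the tightness proof fails the r^{2−ε}-partial dominance condition (the third adjusted partial sum δ₃ is negative) for the truthful report a≻b≻c≻d against the non-local misreport c≻a≻b≻d. -/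
/-- The mechanism from the tightness construction, on objects `a = 0`, `b = 1`,
`c = 2`, `d = 3` (with `s = 1/r`), parametrized by `s` and `α`. -/
noncomputable def tightMech (s α : ℝ) (P : Fin 4 ≃ Fin 4) : Fin 4 → ℝ :=
  let β := s * α
  let γc := (1 - α) / ((s - 1) * (s * (s + 1) - 1))
  let γd := s * (s + 1) * (1 - α) / (s * (s + 1) - 1)
  if P 0 = 0 then ![α, 0, 0, 1 - α]                 -- a ≻ …
  else if P 1 = 0 then ![0, β, 0, 1 - β]            -- b ≻ …
  else if P 3 = 0 then ![0, 0, 0, 1]                -- d ≻ …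
  else if P 3 = 1 then ![0, 0, γc, 1 - γc]          -- c ≻ d ≻ …
  else if P 1 = 1 ∨ (P 0 = 1 ∧ P 1 = 2) then        -- c ≻ b ≻ … or c ≻ a ≻ b ≻ d
    ![1 - γc - γd, γd, γc, 0]
  else ![1 - γc - γd, 0, γc, γd]                    -- c ≻ a ≻ d ≻ b

/-- The misreport `c ≻ a ≻ b ≻ d` as a ranking of the objects `a = 0`, `b = 1`,
`c = 2`, `d = 3`. -/
def cabd : Fin 4 ≃ Fin 4 := (Equiv.swap (0 : Fin 4) 2).trans (Equiv.swap (1 : Fin 4) 2)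

/-- **Failure of `r^(2-ε)`-partial dominance in the tightness construction.**
For every `ε ∈ (0,2)` and all sufficiently large `s > 1` and `α ∈ [0,1)`, setting
`s̃ = s^(2-ε)`, the third adjusted partial sum satisfies the identity
`s̃²(α-1+γc+γd) - s̃·γd - γc = (1-α)(-s^(5-ε)+s^(5-2ε)+s^(3-ε)-1)/(s³-2s+1)`
and is strictly negative; consequently, the constructed mechanism's third adjusted
partial sum for the truthful report `a≻b≻c≻d` against the non-local misreport
`c≻a≻b≻d` is negative. -/
theorem tightMech_fails_delta3 (ε : ℝ) (hε : ε ∈ Set.Ioo (0 : ℝ) 2) :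
    ∃ s₀ : ℝ, 1 < s₀ ∧ ∀ s : ℝ, s₀ ≤ s → ∀ α ∈ Set.Ico (0 : ℝ) 1,
      ∀ γc γd st : ℝ,
        γc = (1 - α) / ((s - 1) * (s * (s + 1) - 1)) →
        γd = s * (s + 1) * (1 - α) / (s * (s + 1) - 1) →
        st = s ^ ((2 : ℝ) - ε) →
        (st ^ 2 * (α - 1 + γc + γd) - st * γd - γc =
            (1 - α) * (-(s ^ ((5 : ℝ) - ε)) + s ^ ((5 : ℝ) - 2 * ε)
              + s ^ ((3 : ℝ) - ε) - 1) / (s ^ 3 - 2 * s + 1)) ∧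
        (st ^ 2 * (α - 1 + γc + γd) - st * γd - γc < 0) ∧
        (st ^ 2 * (tightMech s α (Equiv.refl (Fin 4)) 0 - tightMech s α cabd 0)
          + st * (tightMech s α (Equiv.refl (Fin 4)) 1 - tightMech s α cabd 1)
          + (tightMech s α (Equiv.refl (Fin 4)) 2 - tightMech s α cabd 2) < 0) := by
  obtain ⟨h0, h2⟩ := hε
  refine ⟨(2 : ℝ) ^ (1 / ε), Real.one_lt_rpow (by norm_num) (by positivity), ?_⟩
  intro s hs α hα γc γd st hc hd hst
  obtain ⟨hα0, hα1⟩ := hα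
  have hs1 : 1 < s := lt_of_lt_of_le (Real.one_lt_rpow (by norm_num) (by positivity)) hs
  have hspos : 0 < s := by linarith
  have ht : 2 ≤ s ^ ε := by
    have h := Real.rpow_le_rpow (by positivity) hs h0.le
    rwa [← Real.rpow_mul (by norm_num), one_div_mul_cancel h0.ne', Real.rpow_one] at h
  have hu : 1 < st := by
    rw [hst]; exact Real.one_lt_rpow hs1 (by linarith)
  have hut : st * s ^ ε = s ^ 2 := by
    rw [hst, ← Real.rpow_add hspos, ← Real.rpow_natCast]
    congr 1; push_cast; ring
  have e1 : s ^ ((5 : ℝ) - ε) = st * s ^ 3 := by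
    rw [hst, ← Real.rpow_natCast, ← Real.rpow_add hspos]
    congr 1; push_cast; ring
  have e2 : s ^ ((5 : ℝ) - 2 * ε) = st ^ 2 * s := by
    have : s ^ ((5 : ℝ) - 2 * ε) = s ^ (((2 : ℝ) - ε) + ((2 : ℝ) - ε) + 1) := by
      congr 1; ring
    rw [this, Real.rpow_add hspos, Real.rpow_add hspos, Real.rpow_one, ← hst]; ring
  have e3 : s ^ ((3 : ℝ) - ε) = st * s := by
    have : s ^ ((3 : ℝ) - ε) = s ^ (((2 : ℝ) - ε) + 1) := by
      congr 1; ring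
    rw [this, Real.rpow_add hspos, Real.rpow_one, ← hst]
  have hA : 0 < s - 1 := by linarith
  have hB : 0 < s * (s + 1) - 1 := by nlinarith
  have hD : s ^ 3 - 2 * s + 1 = (s - 1) * (s * (s + 1) - 1) := by ring
  have hid : st ^ 2 * (α - 1 + γc + γd) - st * γd - γc =
            (1 - α) * (-(s ^ ((5 : ℝ) - ε)) + s ^ ((5 : ℝ) - 2 * ε)
              + s ^ ((3 : ℝ) - ε) - 1) / (s ^ 3 - 2 * s + 1) := by
    rw [e1, e2, e3, hD, hc, hd]
    have hA' := hA.ne'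
    have hB' := hB.ne'
    generalize hb : s * (s + 1) - 1 = B at *
    field_simp
    subst hb
    ring
  have hneg : st ^ 2 * (α - 1 + γc + γd) - st * γd - γc < 0 := by
    rw [hid, e1, e2, e3, hD]
    apply div_neg_of_neg_of_pos _ (mul_pos hA hB)
    apply mul_neg_of_pos_of_neg (by linarith)
    have h1 : st + 1 ≤ s ^ 2 := by nlinarith
    have h3 : 0 ≤ (st * s) * (s ^ 2 - (st + 1)) :=
      mul_nonneg (by positivity) (by linarith)
    nlinarith
  refine ⟨hid, hneg, ?_⟩
  have c0 : cabd 0 = 1 := by decide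
  have c1 : cabd 1 = 2 := by decide
  have c3 : cabd 3 = 3 := by decide
  have m1 : tightMech s α (Equiv.refl (Fin 4)) = ![α, 0, 0, 1 - α] := by
    simp [tightMech]
  have m2 : tightMech s α cabd = ![1 - γc - γd, γd, γc, 0] := by
    rw [hc, hd]
    simp [tightMech, c0, c1, c3]
  rw [m1, m2]
  simp only [Matrix.cons_val]
  linarith
end
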